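/- arXiv:2012.01087 — 2 statements merged into one kernel-verified Lean document; each statement's English description precedes it below -/
import Mathlib

section
/- Let ω be a non-quasianalytic weight function with constant K ≥ 1 in condition (α), let n ∈ ℕ₀, let k ∈ ℕ and 1 ≤ p < ∞ with kp > N. Then there exist n' ∈ ℕ₀ with n' ≥ n and a constant C > 0 (depending on n, N, k, p) such that for every f ∈ W^{k,p}(ℝ^N, e^{−nω(|x|)}dx): ‖f · e^{−n'ω}‖_∞ ≤ C · Σ_{|α| ≤ k} ‖e^{−nω} ∂^α f‖_p (a weighted Sobolev/Morrey embedding). -/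
open MeasureTheory Real ENNReal Filter

noncomputable section

abbrev Euc (N : ℕ) := EuclideanSpace ℝ (Fin N)

/-- First-order partial derivative in direction `i`. -/
def pd {N : ℕ} (i : Fin N) (f : Euc N → ℂ) : Euc N → ℂ :=
  fun x => fderiv ℝ f x (EuclideanSpace.single i (1:ℝ))

def pdPow {N : ℕ} (i : Fin N) : ℕ → (Euc N → ℂ) → (Euc N → ℂ)
  | 0, f => f
  | n+1, f => pd i (pdPow i n f)

/-- Multi-index partial derivative `∂^α f`. -/
def mderiv {N : ℕ} (α : Fin N → ℕ) (f : Euc N → ℂ) : Euc N → ℂ :=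
  (List.finRange N).foldr (fun i g => pdPow i (α i) g) f

/-- Length `|α|` of a multi-index. -/
def msize {N : ℕ} (α : Fin N → ℕ) : ℕ := ∑ i, α i

/-- Weighted `L^p` norm `‖e^{w} g‖_p` (value in `ℝ≥0∞`). -/
def wLp {N : ℕ} (p : ℝ≥0∞) (w : Euc N → ℝ) (g : Euc N → ℂ) : ℝ≥0∞ :=
  eLpNorm (fun x => Real.exp (w x) * ‖g x‖) p volume

def youngConj (φ : ℝ → ℝ) (s : ℝ) : ℝ :=
  sSup {y | ∃ t ≥ 0, y = s * t - φ t}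

/-- Young conjugate `φ*` of `φ_ω = ω ∘ exp`. -/
def phiStar (ω : ℝ → ℝ) (s : ℝ) : ℝ :=
  youngConj (fun t => ω (Real.exp t)) s

/-- A non-quasianalytic weight function in the sense of Braun–Meise–Taylor. -/
structure IsWeightFun (ω : ℝ → ℝ) : Prop where
  continuous : ContinuousOn ω (Set.Ici 0)
  mono : MonotoneOn ω (Set.Ici 0)
  nonneg : ∀ t, 0 ≤ t → 0 ≤ ω t
  alpha : ∃ K ≥ 1, ∀ t ≥ 0, ω (2*t) ≤ K * (1 + ω t)
  beta : IntegrableOn (fun t => ω t / (1 + t^2)) (Set.Ici 1)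
  gamma : ∃ a b : ℝ, 0 < b ∧ ∀ t ≥ 0, a + b * Real.log (1+t) ≤ ω t
  delta : ConvexOn ℝ (Set.Ici 0) (fun t => ω (Real.exp t))
  vanish : ∀ t ∈ Set.Icc (0:ℝ) 1, ω t = 0

/-- `g` is the weak (distributional) derivative `∂^α f`. -/
def IsWeakDeriv {N : ℕ} (α : Fin N → ℕ) (f g : Euc N → ℂ) : Prop :=
  ∀ φ : Euc N → ℂ, ContDiff ℝ (⊤ : ℕ∞) φ → HasCompactSupport φ →
    ∫ x, f x * mderiv α φ x = (-1 : ℂ) ^ (msize α) * ∫ x, g x * φ x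

/-! Let `F` be smooth. Taylor's formula with integral remainder, based at `x + y` and evaluated at
`x`, bounds `|F x|` by the derivatives of `F` of order at most `k` at `x + y`, plus the integral
over `t ∈ (0, 1]` of `t^(k-1)` times the derivatives at `x + t y`. Integrating over `y` in a ball
and using Hölder's inequality, the integral over the shrunken ball costs a factor `t^(-N/p)`, and
`t^(k-1-N/p)` is integrable on `(0, 1]` exactly when `k p > N`. Apply this to mollifications of
`f`: their derivatives are mollifications of the weak derivatives of `f`, so the bound passes to
the limit and controls `|f x|` by the `L^p` norms of the weak derivatives on a ball around `x`.
Finally the doubling condition gives `n ω(|z|) ≤ n' ω(|x|) + c` for `|z - x| < 1`, so on the unit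
ball around `x` the weight `e^{-nω}` is bounded below by a constant times `e^{-n'ω(|x|)}`. -/

section PartialDerivatives

variable {N : ℕ} {f g : Euc N → ℂ}

lemma contDiff_pd (i : Fin N) (hf : ContDiff ℝ (⊤ : ℕ∞) f) : ContDiff ℝ (⊤ : ℕ∞) (pd i f) :=
  (hf.fderiv_right (m := (⊤ : ℕ∞)) (by simp)).clm_apply contDiff_const

lemma hasCompactSupport_pd (i : Fin N) (hf : HasCompactSupport f) : HasCompactSupport (pd i f) :=
  hf.fderiv_apply (𝕜 := ℝ) _

lemma pd_add (i : Fin N) (hf : Differentiable ℝ f) (hg : Differentiable ℝ g) :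
    pd i (f + g) = pd i f + pd i g := by
  funext x
  simp [pd, fderiv_add (hf x) (hg x)]

lemma pd_const_smul (i : Fin N) (c : ℂ) (hf : Differentiable ℝ f) :
    pd i (c • f) = c • pd i f := by
  funext x
  simp [pd, fderiv_const_smul (hf x)]

lemma pd_comp_const_sub (i : Fin N) (z : Euc N) (hf : Differentiable ℝ f) :
    pd i (fun w => f (z - w)) = fun w => -pd i f (z - w) := by
  funext w
  have h := (hf (z - w)).hasFDerivAt.comp w ((hasFDerivAt_id w).const_sub z)
  change fderiv ℝ (f ∘ (z - ·)) w _ = _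
  rw [h.fderiv]
  simp [pd]

lemma pd_comm (i j : Fin N) (hf : ContDiff ℝ 2 f) : pd i (pd j f) = pd j (pd i f) := by
  funext x
  have hf' : DifferentiableAt ℝ (fderiv ℝ f) x :=
    (hf.fderiv_right (m := 1) (by norm_num)).differentiable (by norm_num) x
  have pd_pd (a b : Fin N) : pd a (pd b f) x =
      fderiv ℝ (fderiv ℝ f) x (EuclideanSpace.single a 1) (EuclideanSpace.single b 1) := by
    unfold pd
    simp [fderiv_clm_apply hf' (differentiableAt_const _)]
  rw [pd_pd, pd_pd]
  exact hf.contDiffAt.isSymmSndFDerivAt (by simp) _ _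

/-- The iterated partial derivative `∂_{i₁} ⋯ ∂_{iⱼ} f` along a list `[i₁, …, iⱼ]` of directions. -/
def pdList (l : List (Fin N)) (f : Euc N → ℂ) : Euc N → ℂ := l.foldr pd f

lemma contDiff_pdList (l : List (Fin N)) (hf : ContDiff ℝ (⊤ : ℕ∞) f) :
    ContDiff ℝ (⊤ : ℕ∞) (pdList l f) := by
  induction l with
  | nil => exact hf
  | cons i l ih => exact contDiff_pd i ih

lemma differentiable_pdList (l : List (Fin N)) (hf : ContDiff ℝ (⊤ : ℕ∞) f) :
    Differentiable ℝ (pdList l f) :=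
  (contDiff_pdList l hf).differentiable (by simp)

lemma hasCompactSupport_pdList (l : List (Fin N)) (hf : HasCompactSupport f) :
    HasCompactSupport (pdList l f) := by
  induction l with
  | nil => exact hf
  | cons i l ih => exact hasCompactSupport_pd i ih

lemma pdList_add (l : List (Fin N)) (hf : ContDiff ℝ (⊤ : ℕ∞) f)
    (hg : ContDiff ℝ (⊤ : ℕ∞) g) : pdList l (f + g) = pdList l f + pdList l g := by
  induction l with
  | nil => rfl
  | cons i l ih =>
    exact (congrArg (pd i) ih).trans
      (pd_add i (differentiable_pdList l hf) (differentiable_pdList l hg))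

lemma pdList_comp_const_sub (l : List (Fin N)) (z : Euc N) (hf : ContDiff ℝ (⊤ : ℕ∞) f) :
    pdList l (fun w => f (z - w)) = (-1 : ℂ) ^ l.length • fun w => pdList l f (z - w) := by
  induction l with
  | nil => simp [pdList]
  | cons i l ih =>
    have hd : Differentiable ℝ fun w => pdList l f (z - w) :=
      (differentiable_pdList l hf).comp (by fun_prop)
    calc pd i (pdList l fun w => f (z - w))
        = (-1 : ℂ) ^ l.length • pd i (fun w => pdList l f (z - w)) := by
          rw [ih, pd_const_smul i _ hd]
      _ = (-1 : ℂ) ^ (i :: l).length • fun w => pd i (pdList l f) (z - w) := by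
          rw [pd_comp_const_sub i z (differentiable_pdList l hf)]
          funext w
          simp [pow_succ]

lemma pdList_perm {l l' : List (Fin N)} (h : l.Perm l') (hf : ContDiff ℝ (⊤ : ℕ∞) f) :
    pdList l f = pdList l' f := by
  induction h with
  | nil => rfl
  | cons i _ ih => exact congrArg (pd i) ih
  | swap i j l => exact pd_comm j i ((contDiff_pdList l hf).of_le (WithTop.coe_le_coe.2 le_top))
  | trans _ _ ih ih' => exact ih.trans ih'

lemma iteratedFDeriv_single_eq_pdList {n : ℕ} (s : Fin n → Fin N)
    (hf : ContDiff ℝ (⊤ : ℕ∞) f) (z : Euc N) :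
    iteratedFDeriv ℝ n f z (fun j => EuclideanSpace.single (s j) 1) =
      pdList (List.ofFn s) f z := by
  induction n generalizing z with
  | zero => simp [pdList]
  | succ n ih =>
    have hd : DifferentiableAt ℝ (iteratedFDeriv ℝ n f) z :=
      hf.differentiable_iteratedFDeriv (by exact_mod_cast ENat.natCast_lt_top n) z
    rw [hd.iteratedFDeriv_succ_apply_left', List.ofFn_succ]
    exact congrArg (fun g => pd (s 0) g z) (funext (ih (Fin.tail s)))

/-- The list of directions in which `∂^α` differentiates: each `i` occurs `α i` times. -/
def directions (α : Fin N → ℕ) : List (Fin N) :=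
  (List.finRange N).flatMap fun i => List.replicate (α i) i

lemma count_directions (α : Fin N → ℕ) (i : Fin N) : (directions α).count i = α i := by
  simp [directions, List.count_flatMap, Function.comp_def, List.count_replicate,
    ← Fin.sum_univ_def]

lemma length_directions (α : Fin N → ℕ) : (directions α).length = msize α := by
  simp [directions, msize, List.length_flatMap, Fin.sum_univ_def]

lemma directions_count_perm (l : List (Fin N)) : (directions fun i => l.count i).Perm l :=
  List.perm_iff_count.2 fun i => count_directions _ i

lemma msize_count (l : List (Fin N)) : msize (fun i => l.count i) = l.length := by
  rw [← length_directions, (directions_count_perm l).length_eq]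

lemma mderiv_eq_pdList (α : Fin N → ℕ) (f : Euc N → ℂ) :
    mderiv α f = pdList (directions α) f := by
  have pdPow_eq (i : Fin N) (n : ℕ) (g : Euc N → ℂ) :
      pdPow i n g = (List.replicate n i).foldr pd g := by
    induction n with
    | zero => rfl
    | succ n ih => exact congrArg (pd i) ih
  simp only [mderiv, pdList, directions, List.foldr_flatMap, pdPow_eq]

lemma pdList_eq_mderiv (l : List (Fin N)) (hf : ContDiff ℝ (⊤ : ℕ∞) f) :
    pdList l f = mderiv (fun i => l.count i) f := by
  rw [mderiv_eq_pdList, pdList_perm (directions_count_perm l) hf]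

lemma contDiff_mderiv (α : Fin N → ℕ) (hf : ContDiff ℝ (⊤ : ℕ∞) f) :
    ContDiff ℝ (⊤ : ℕ∞) (mderiv α f) :=
  mderiv_eq_pdList α f ▸ contDiff_pdList _ hf

lemma hasCompactSupport_mderiv (α : Fin N → ℕ) (hf : HasCompactSupport f) :
    HasCompactSupport (mderiv α f) :=
  mderiv_eq_pdList α f ▸ hasCompactSupport_pdList _ hf

lemma mderiv_add (α : Fin N → ℕ) (hf : ContDiff ℝ (⊤ : ℕ∞) f) (hg : ContDiff ℝ (⊤ : ℕ∞) g) :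
    mderiv α (f + g) = mderiv α f + mderiv α g := by
  simp only [mderiv_eq_pdList, pdList_add _ hf hg]

lemma mderiv_comp_const_sub (α : Fin N → ℕ) (z : Euc N) (hf : ContDiff ℝ (⊤ : ℕ∞) f) :
    mderiv α (fun w => f (z - w)) = (-1 : ℂ) ^ msize α • fun w => mderiv α f (z - w) := by
  simp only [mderiv_eq_pdList, pdList_comp_const_sub _ z hf, length_directions]

end PartialDerivatives

section TestFunctions

variable {E 𝕜 : Type*} [NormedAddCommGroup E] [MeasurableSpace E] [BorelSpace E]
  [RCLike 𝕜] {μ : Measure E}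

lemma integrable_mul_of_locallyIntegrable {f ψ : E → 𝕜} (hf : LocallyIntegrable f μ)
    (hψ : Continuous ψ) (hc : HasCompactSupport ψ) : Integrable (fun x => f x * ψ x) μ := by
  simpa only [smul_eq_mul, mul_comm] using hf.integrable_smul_left_of_hasCompactSupport hψ hc

lemma locallyIntegrable_of_forall_integrable_mul [NormedSpace ℝ E] [FiniteDimensional ℝ E]
    {g : E → 𝕜}
    (h : ∀ φ : E → 𝕜, ContDiff ℝ (⊤ : ℕ∞) φ → HasCompactSupport φ →
      Integrable (fun x => g x * φ x) μ) : LocallyIntegrable g μ := by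
  intro x
  let b : ContDiffBump x := ⟨1, 2, one_pos, one_lt_two⟩
  have hb : Integrable (fun y => g y * (b y : 𝕜)) μ :=
    h _ ((RCLike.ofRealCLM (K := 𝕜)).contDiff.comp b.contDiff)
      (b.hasCompactSupport.comp_left (g := ((↑) : ℝ → 𝕜)) (by simp))
  refine ⟨Metric.closedBall x 1, Metric.closedBall_mem_nhds x one_pos, ?_⟩
  refine hb.integrableOn.congr_fun (fun y hy => ?_) Metric.isClosed_closedBall.measurableSet
  simp [b.one_of_mem_closedBall hy]

end TestFunctions

namespace IsWeakDeriv

variable {N : ℕ} {α : Fin N → ℕ} {f g g' : Euc N → ℂ}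

lemma congr_ae (hg : IsWeakDeriv α f g) (h : g =ᵐ[volume] g') : IsWeakDeriv α f g' := by
  intro φ hφ hc
  rw [hg φ hφ hc, integral_congr_ae (h.mono fun x hx => congrArg (· * φ x) hx)]

/-- `IsWeakDeriv` does not ask that `g` be locally integrable. If `g * φ₀` is not integrable, then
neither is `g * (φ + φ₀)` whenever `g * φ` is, and the integrals that diverge are `0` by
convention. -/
lemma zero_of_not_integrable (hf : LocallyIntegrable f volume) (hg : IsWeakDeriv α f g)
    {φ₀ : Euc N → ℂ} (hφ₀ : ContDiff ℝ (⊤ : ℕ∞) φ₀) (hc₀ : HasCompactSupport φ₀)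
    (h₀ : ¬ Integrable fun x => g x * φ₀ x) : IsWeakDeriv α f 0 := by
  have integral_eq_zero {φ : Euc N → ℂ} (hφ : ContDiff ℝ (⊤ : ℕ∞) φ) (hc : HasCompactSupport φ)
      (h : ¬ Integrable fun x => g x * φ x) : ∫ x, f x * mderiv α φ x = 0 := by
    rw [hg φ hφ hc, integral_undef h, mul_zero]
  have integrable_mul {φ : Euc N → ℂ} (hφ : ContDiff ℝ (⊤ : ℕ∞) φ) (hc : HasCompactSupport φ) :
      Integrable fun x => f x * mderiv α φ x :=
    integrable_mul_of_locallyIntegrable hf (contDiff_mderiv α hφ).continuous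
      (hasCompactSupport_mderiv α hc)
  intro φ hφ hc
  suffices ∫ x, f x * mderiv α φ x = 0 by simpa
  by_cases h : Integrable fun x => g x * φ x
  · have h_add : ¬ Integrable fun x => g x * (φ + φ₀) x := fun h' =>
      h₀ <| (h'.sub h).congr <| .of_forall fun x => by simp [mul_add]
    calc ∫ x, f x * mderiv α φ x
        = (∫ x, f x * mderiv α φ x) + ∫ x, f x * mderiv α φ₀ x := by
          rw [integral_eq_zero hφ₀ hc₀ h₀, add_zero]
      _ = ∫ x, f x * mderiv α (φ + φ₀) x := by
          rw [← integral_add (integrable_mul hφ hc) (integrable_mul hφ₀ hc₀),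
            mderiv_add α hφ hφ₀]
          simp only [Pi.add_apply, mul_add]
      _ = 0 := integral_eq_zero (hφ.add hφ₀) (hc.add hc₀) h_add
  · exact integral_eq_zero hφ hc h

lemma exists_measurable_enorm_le (hf : LocallyIntegrable f volume) (hg : IsWeakDeriv α f g) :
    ∃ g', Measurable g' ∧ IsWeakDeriv α f g' ∧ ∀ᵐ x, ‖g' x‖ₑ ≤ ‖g x‖ₑ := by
  by_cases h : ∀ φ : Euc N → ℂ, ContDiff ℝ (⊤ : ℕ∞) φ → HasCompactSupport φ →
      Integrable fun x => g x * φ x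
  · have hm := (locallyIntegrable_of_forall_integrable_mul h).aestronglyMeasurable
    exact ⟨hm.mk g, hm.stronglyMeasurable_mk.measurable, hg.congr_ae hm.ae_eq_mk,
      hm.ae_eq_mk.mono fun x hx => by rw [hx]⟩
  · push Not at h
    obtain ⟨φ₀, hφ₀, hc₀, h₀⟩ := h
    exact ⟨0, measurable_zero, hg.zero_of_not_integrable hf hφ₀ hc₀ h₀, by simp⟩

end IsWeakDeriv

section Mollification

open scoped Convolution

variable {N : ℕ} {f ψ : Euc N → ℂ}

lemma pd_convolution (i : Fin N) (hf : LocallyIntegrable f volume)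
    (hψ : ContDiff ℝ (⊤ : ℕ∞) ψ) (hc : HasCompactSupport ψ) :
    pd i (f ⋆[ContinuousLinearMap.mul ℝ ℂ, volume] ψ) =
      f ⋆[ContinuousLinearMap.mul ℝ ℂ, volume] pd i ψ := by
  funext x
  exact (congrArg (· (EuclideanSpace.single i 1)) (hc.hasFDerivAt_convolution_right
    (ContinuousLinearMap.mul ℝ ℂ) hf (hψ.of_le (by simp)) x).fderiv).trans
    (convolution_precompR_apply _ hf (hc.fderiv ℝ) (hψ.continuous_fderiv (by simp)) x _)

lemma mderiv_convolution (α : Fin N → ℕ) (hf : LocallyIntegrable f volume)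
    (hψ : ContDiff ℝ (⊤ : ℕ∞) ψ) (hc : HasCompactSupport ψ) :
    mderiv α (f ⋆[ContinuousLinearMap.mul ℝ ℂ, volume] ψ) =
      f ⋆[ContinuousLinearMap.mul ℝ ℂ, volume] mderiv α ψ := by
  simp only [mderiv_eq_pdList]
  induction directions α with
  | nil => rfl
  | cons i l ih =>
    exact (congrArg (pd i) ih).trans
      (pd_convolution i hf (contDiff_pdList l hψ) (hasCompactSupport_pdList l hc))

lemma IsWeakDeriv.mderiv_convolution {α : Fin N → ℕ} {g : Euc N → ℂ} (hg : IsWeakDeriv α f g)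
    (hf : LocallyIntegrable f volume) (hψ : ContDiff ℝ (⊤ : ℕ∞) ψ) (hc : HasCompactSupport ψ) :
    mderiv α (f ⋆[ContinuousLinearMap.mul ℝ ℂ, volume] ψ) =
      g ⋆[ContinuousLinearMap.mul ℝ ℂ, volume] ψ := by
  rw [_root_.mderiv_convolution α hf hψ hc]
  funext z
  have key := hg (fun w => ψ (z - w)) (hψ.comp (by fun_prop))
    (hc.comp_homeomorph (Homeomorph.subLeft z))
  have hsign : ((-1 : ℂ) ^ msize α) ≠ 0 := by simp
  refine mul_left_cancel₀ hsign (Eq.trans ?_ key)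
  rw [mderiv_comp_const_sub α z hψ, convolution_def, ← integral_const_mul]
  simp [mul_left_comm]

/-- Mollifiers at scale `δ`: complex-valued test functions of total mass at most one supported in
the ball of radius `δ`. Neither positivity nor mass exactly one is asked for. -/
structure IsMollifier (δ : ℝ) (ψ : Euc N → ℂ) : Prop where
  contDiff : ContDiff ℝ (⊤ : ℕ∞) ψ
  hasCompactSupport : HasCompactSupport ψ
  lintegral_enorm_le_one : ∫⁻ x, ‖ψ x‖ₑ ≤ 1
  support_subset : Function.support ψ ⊆ Metric.ball 0 δ

lemma isMollifier_contDiffBump_normed (φ : ContDiffBump (0 : Euc N)) :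
    IsMollifier φ.rOut fun x => (φ.normed volume x : ℂ) where
  contDiff := Complex.ofRealCLM.contDiff.comp φ.contDiff_normed
  hasCompactSupport := φ.hasCompactSupport_normed.comp_left (g := ((↑) : ℝ → ℂ)) (by simp)
  lintegral_enorm_le_one := by
    have h (x : Euc N) : ‖(φ.normed volume x : ℂ)‖ₑ = ENNReal.ofReal (φ.normed volume x) := by
      rw [← ofReal_norm, Complex.norm_real, Real.norm_of_nonneg (φ.nonneg_normed x)]
    simp only [h]
    rw [← ofReal_integral_eq_lintegral_ofReal φ.integrable_normed
      (.of_forall φ.nonneg_normed), φ.integral_normed, ofReal_one]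
  support_subset x hx := by
    rw [← φ.support_normed_eq (μ := volume)]
    simpa using hx

lemma IsMollifier.mono {δ ε : ℝ} (hψ : IsMollifier δ ψ) (h : δ ≤ ε) : IsMollifier ε ψ :=
  { hψ with support_subset := hψ.support_subset.trans (Metric.ball_subset_ball h) }

lemma ae_enorm_le_of_forall_mollifier {δ : ℝ} (hδ : 0 < δ) {B : Euc N → ℝ≥0∞}
    (hf : LocallyIntegrable f volume)
    (h : ∀ ψ, IsMollifier δ ψ → ∀ x,
      ‖(f ⋆[ContinuousLinearMap.mul ℝ ℂ, volume] ψ) x‖ₑ ≤ B x) :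
    ∀ᵐ x, ‖f x‖ₑ ≤ B x := by
  let φ (i : ℕ) : ContDiffBump (0 : Euc N) :=
    { rIn := δ / (i + 1) / 2
      rOut := δ / (i + 1)
      rIn_pos := by positivity
      rIn_lt_rOut := half_lt_self (by positivity) }
  have rOut_tendsto : Tendsto (fun i => (φ i).rOut) atTop (nhds 0) := by
    simpa [φ, div_eq_mul_inv] using
      (tendsto_one_div_add_atTop_nhds_zero_nat (𝕜 := ℝ)).const_mul δ
  have rOut_le (i : ℕ) : (φ i).rOut ≤ δ := div_le_self hδ.le (by simp)
  filter_upwards [ContDiffBump.ae_convolution_tendsto_right_of_locallyIntegrable (K := 2)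
    rOut_tendsto (.of_forall fun i => (mul_div_cancel₀ _ two_ne_zero).ge) hf] with x hx
  refine le_of_tendsto hx.enorm (.of_forall fun i => ?_)
  refine le_of_eq_of_le (congrArg _ ?_)
    (h _ ((isMollifier_contDiffBump_normed (φ i)).mono (rOut_le i)) x)
  rw [convolution_eq_swap]
  simp [convolution_def, mul_comm]

end Mollification

section MultiIndices

variable {N : ℕ}

/-- The finite set of multi-indices `α` with `|α| ≤ k`. -/
def multiIndices (N k : ℕ) : Finset (Fin N → ℕ) :=
  (Finset.range (k + 1)).biUnion (Finset.piAntidiag Finset.univ)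

lemma mem_multiIndices {k : ℕ} {α : Fin N → ℕ} : α ∈ multiIndices N k ↔ msize α ≤ k := by
  simp [multiIndices, msize]

lemma tsum_ite_msize_le {M : Type*} [AddCommMonoid M] [TopologicalSpace M] (k : ℕ)
    (a : (Fin N → ℕ) → M) :
    ∑' α : Fin N → ℕ, (if msize α ≤ k then a α else 0) = ∑ α ∈ multiIndices N k, a α := by
  simp only [← mem_multiIndices]
  rw [tsum_eq_sum fun α hα => if_neg hα]
  exact Finset.sum_congr rfl fun α hα => if_pos hα

/-- The size `∑_{|α| ≤ k} |D_α(z)|` at the point `z` of a family `D` of functions indexed by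
multi-indices, typically the (weak) derivatives `D_α = ∂^α f` of a single function. -/
def jetNorm (k : ℕ) (D : (Fin N → ℕ) → Euc N → ℂ) (z : Euc N) : ℝ≥0∞ :=
  ∑ α ∈ multiIndices N k, ‖D α z‖ₑ

lemma enorm_le_jetNorm {k : ℕ} {α : Fin N → ℕ} (hα : msize α ≤ k)
    (D : (Fin N → ℕ) → Euc N → ℂ) (z : Euc N) : ‖D α z‖ₑ ≤ jetNorm k D z :=
  Finset.single_le_sum (f := fun α => ‖D α z‖ₑ) (fun _ _ => zero_le) (mem_multiIndices.2 hα)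

lemma measurable_jetNorm {k : ℕ} {D : (Fin N → ℕ) → Euc N → ℂ}
    (hD : ∀ α, msize α ≤ k → Measurable (D α)) : Measurable (jetNorm k D) :=
  Finset.measurable_fun_sum _ fun α hα => (hD α (mem_multiIndices.1 hα)).enorm

end MultiIndices

section Taylor

lemma enorm_le_taylor {E F : Type*} [NormedAddCommGroup E] [NormedSpace ℝ E]
    [NormedAddCommGroup F] [NormedSpace ℝ F] [CompleteSpace F] {f : E → F} {m : ℕ}
    (hf : ContDiff ℝ (m + 1) f) (x y : E) :
    ‖f x‖ₑ ≤ (∑ j ∈ Finset.range (m + 1), ‖iteratedFDeriv ℝ j f (x + y) fun _ => -y‖ₑ) +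
      ∫⁻ t in Set.Ioc (0 : ℝ) 1,
        ENNReal.ofReal (t ^ m) * ‖iteratedFDeriv ℝ (m + 1) f (x + t • y) fun _ => -y‖ₑ := by
  have enorm_inv_factorial_smul_le (j : ℕ) (v : F) : ‖((j.factorial : ℝ)⁻¹) • v‖ₑ ≤ ‖v‖ₑ := by
    simp only [← ofReal_norm, norm_smul, norm_inv, Real.norm_natCast]
    exact ENNReal.ofReal_le_ofReal <| mul_le_of_le_one_left (norm_nonneg v) <|
      inv_le_one_of_one_le₀ <| mod_cast j.factorial_pos
  have reverse : ∫ t in (0 : ℝ)..1,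
        (1 - t) ^ m • iteratedFDeriv ℝ (m + 1) f (x + y + t • -y) (fun _ => -y) =
      ∫ t in (0 : ℝ)..1, t ^ m • iteratedFDeriv ℝ (m + 1) f (x + t • y) fun _ => -y := by
    have segment (t : ℝ) : x + y + t • -y = x + (1 - t) • y := by module
    simp only [segment]
    simpa using intervalIntegral.integral_comp_sub_left
      (fun t => t ^ m • iteratedFDeriv ℝ (m + 1) f (x + t • y) fun _ => -y) (1 : ℝ)
      (a := 0) (b := 1)
  have taylor := map_add_eq_sum_add_integral_iteratedFDeriv (x := x + y) (y := -y)
    fun t _ => hf.contDiffAt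
  rw [add_neg_cancel_right, reverse, intervalIntegral.integral_of_le zero_le_one] at taylor
  rw [taylor]
  refine (enorm_add_le _ _).trans (add_le_add ?_ ?_)
  · exact (enorm_sum_le _ _).trans (Finset.sum_le_sum fun j _ => enorm_inv_factorial_smul_le j _)
  · refine (enorm_inv_factorial_smul_le m _).trans <|
      (enorm_integral_le_lintegral_enorm _).trans_eq <|
        setLIntegral_congr_fun measurableSet_Ioc fun t ht => ?_
    rw [enorm_smul, Real.enorm_of_nonneg (pow_nonneg ht.1.le m)]

variable {N : ℕ} {F : Euc N → ℂ}

lemma enorm_iteratedFDeriv_le_jetNorm (hF : ContDiff ℝ (⊤ : ℕ∞) F) {j k : ℕ} (hjk : j ≤ k)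
    (z v : Euc N) :
    ‖iteratedFDeriv ℝ j F z fun _ => v‖ₑ ≤
      (N * ‖v‖ₑ) ^ j * jetNorm k (fun α => mderiv α F) z := by
  have expand : (iteratedFDeriv ℝ j F z fun _ => v) =
      ∑ s : Fin j → Fin N, (∏ a, v (s a)) • pdList (List.ofFn s) F z := by
    have hv : v = ∑ i, v i • EuclideanSpace.single i (1 : ℝ) := by
      ext i
      simp [Pi.single_apply]
    conv_lhs => rw [hv, ContinuousMultilinearMap.map_sum]
    exact Finset.sum_congr rfl fun s _ => by
      rw [ContinuousMultilinearMap.map_smul_univ, iteratedFDeriv_single_eq_pdList s hF]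
  have coord_le (i : Fin N) : ‖v i‖ₑ ≤ ‖v‖ₑ := by
    simpa only [← ofReal_norm] using ENNReal.ofReal_le_ofReal (PiLp.norm_apply_le v i)
  have term_le (s : Fin j → Fin N) : ‖(∏ a, v (s a)) • pdList (List.ofFn s) F z‖ₑ ≤
      ‖v‖ₑ ^ j * jetNorm k (fun α => mderiv α F) z := by
    rw [enorm_smul, pdList_eq_mderiv _ hF]
    gcongr
    · rw [← ofReal_norm, norm_prod, ENNReal.ofReal_prod_of_nonneg fun _ _ => norm_nonneg _]
      exact (Finset.prod_le_prod' fun a _ => (ofReal_norm _).trans_le (coord_le (s a))).trans_eq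
        (by simp)
    · exact enorm_le_jetNorm (by simpa [msize_count] using hjk) (fun α => mderiv α F) z
  calc ‖iteratedFDeriv ℝ j F z fun _ => v‖ₑ
      ≤ ∑ _s : Fin j → Fin N, ‖v‖ₑ ^ j * jetNorm k (fun α => mderiv α F) z := by
        rw [expand]
        exact (enorm_sum_le _ _).trans (Finset.sum_le_sum fun s _ => term_le s)
    _ = (N * ‖v‖ₑ) ^ j * jetNorm k (fun α => mderiv α F) z := by
        simp [mul_pow, mul_assoc]

lemma enorm_le_taylor_jetNorm (hF : ContDiff ℝ (⊤ : ℕ∞) F) (m : ℕ) (x y : Euc N) :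
    ‖F x‖ₑ ≤ (1 + N * ‖y‖ₑ) ^ (m + 1) *
      ((m + 1) * jetNorm (m + 1) (fun α => mderiv α F) (x + y) +
        ∫⁻ t in Set.Ioc (0 : ℝ) 1,
          ENNReal.ofReal (t ^ m) * jetNorm (m + 1) (fun α => mderiv α F) (x + t • y)) := by
  set J := jetNorm (m + 1) fun α => mderiv α F
  set c : ℝ≥0∞ := (1 + N * ‖y‖ₑ) ^ (m + 1)
  have deriv_le {j : ℕ} (hj : j ≤ m + 1) (z : Euc N) :
      ‖iteratedFDeriv ℝ j F z fun _ => -y‖ₑ ≤ c * J z := by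
    refine (enorm_iteratedFDeriv_le_jetNorm hF hj z (-y)).trans (mul_le_mul_left ?_ _)
    rw [enorm_neg]
    exact (pow_le_pow_left₀ zero_le le_add_self j).trans (pow_le_pow_right₀ le_self_add hj)
  have hFm : ContDiff ℝ (m + 1) F := hF.of_le (mod_cast le_top)
  calc ‖F x‖ₑ
      ≤ (∑ _j ∈ Finset.range (m + 1), c * J (x + y)) +
        ∫⁻ t in Set.Ioc (0 : ℝ) 1, c * (ENNReal.ofReal (t ^ m) * J (x + t • y)) := by
        refine (enorm_le_taylor hFm x y).trans (add_le_add ?_ ?_)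
        · exact Finset.sum_le_sum fun j hj => deriv_le (Finset.mem_range.1 hj).le _
        · refine lintegral_mono fun t => ?_
          rw [mul_left_comm]
          exact mul_le_mul_right (deriv_le le_rfl _) _
    _ = c * ((m + 1) * J (x + y) +
          ∫⁻ t in Set.Ioc (0 : ℝ) 1, ENNReal.ofReal (t ^ m) * J (x + t • y)) := by
        rw [lintegral_const_mul' _ _ (by finiteness)]
        simp
        ring

end Taylor

section Averages

lemma lintegral_pow_mul_rpow_neg_ne_top {m : ℕ} {s : ℝ} (hs : s < m + 1) :
    ∫⁻ t in Set.Ioc (0 : ℝ) 1, ENNReal.ofReal (t ^ m) * ENNReal.ofReal (t ^ (-s)) ≠ ⊤ := by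
  have h_int : IntegrableOn (fun t : ℝ => t ^ (m - s)) (Set.Ioc 0 1) :=
    (intervalIntegrable_iff_integrableOn_Ioc_of_le zero_le_one).1
      (intervalIntegral.intervalIntegrable_rpow' (by linarith))
  refine ne_of_eq_of_ne (setLIntegral_congr_fun measurableSet_Ioc fun t ht => ?_)
    h_int.lintegral_lt_top.ne
  rw [← ENNReal.ofReal_mul (pow_nonneg ht.1.le m), ← Real.rpow_natCast, ← Real.rpow_add ht.1,
    sub_eq_add_neg]

lemma enorm_mul_volume_ball_le {N : ℕ} {F : Euc N → ℂ} (hF : ContDiff ℝ (⊤ : ℕ∞) F) (m : ℕ)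
    (x : Euc N) (r : ℝ) :
    ‖F x‖ₑ * volume (Metric.ball (0 : Euc N) r) ≤ (1 + N * ENNReal.ofReal r) ^ (m + 1) *
      ((m + 1) * (∫⁻ y in Metric.ball 0 r, jetNorm (m + 1) (fun α => mderiv α F) (x + y)) +
        ∫⁻ t in Set.Ioc (0 : ℝ) 1, ENNReal.ofReal (t ^ m) *
          ∫⁻ y in Metric.ball 0 r, jetNorm (m + 1) (fun α => mderiv α F) (x + t • y)) := by
  set J := jetNorm (m + 1) fun α => mderiv α F
  have hJ : Measurable J :=
    measurable_jetNorm fun α _ => (contDiff_mderiv α hF).continuous.measurable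
  set c : ℝ≥0∞ := (1 + N * ENNReal.ofReal r) ^ (m + 1)
  have pointwise {y : Euc N} (hy : y ∈ Metric.ball 0 r) : ‖F x‖ₑ ≤
      c * ((m + 1) * J (x + y) +
        ∫⁻ t in Set.Ioc (0 : ℝ) 1, ENNReal.ofReal (t ^ m) * J (x + t • y)) := by
    refine (enorm_le_taylor_jetNorm hF m x y).trans (mul_le_mul_left ?_ _)
    have : ‖y‖ₑ ≤ ENNReal.ofReal r := by
      rw [← ofReal_norm]
      exact ENNReal.ofReal_le_ofReal (mem_ball_zero_iff.1 hy).le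
    unfold c
    gcongr
  calc ‖F x‖ₑ * volume (Metric.ball (0 : Euc N) r)
      = ∫⁻ _ in Metric.ball (0 : Euc N) r, ‖F x‖ₑ := (setLIntegral_const _ _).symm
    _ ≤ ∫⁻ y in Metric.ball 0 r, c * ((m + 1) * J (x + y) +
          ∫⁻ t in Set.Ioc (0 : ℝ) 1, ENNReal.ofReal (t ^ m) * J (x + t • y)) :=
        setLIntegral_mono' measurableSet_ball fun y hy => pointwise hy
    _ = c * ((m + 1) * (∫⁻ y in Metric.ball 0 r, J (x + y)) +
          ∫⁻ t in Set.Ioc (0 : ℝ) 1, ∫⁻ y in Metric.ball 0 r,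
            ENNReal.ofReal (t ^ m) * J (x + t • y)) := by
        rw [lintegral_const_mul _ (by fun_prop), lintegral_add_left (by fun_prop),
          lintegral_const_mul _ (by fun_prop), lintegral_lintegral_swap (by fun_prop)]
    _ = _ := by
        congr! 4 with t
        exact lintegral_const_mul _ (by fun_prop)

/-- The integrals over balls may blow up like `t ^ (-s)`, because the remainder of Taylor's formula
carries the weight `t ^ m`. -/
lemma exists_enorm_le_of_lintegral_jetNorm_le {N : ℕ} (m : ℕ) {s r : ℝ} (hs : s < m + 1)
    (hr : 0 < r) :
    ∃ C : ℝ≥0∞, C ≠ ⊤ ∧ ∀ (F : Euc N → ℂ) (x : Euc N) (A : ℝ≥0∞), ContDiff ℝ (⊤ : ℕ∞) F →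
      (∀ t ∈ Set.Ioc (0 : ℝ) 1,
        ∫⁻ y in Metric.ball 0 r, jetNorm (m + 1) (fun α => mderiv α F) (x + t • y) ≤
          ENNReal.ofReal (t ^ (-s)) * A) →
      ‖F x‖ₑ ≤ C * A := by
  set V : ℝ≥0∞ := volume (Metric.ball (0 : Euc N) r)
  have hV₀ : V ≠ 0 := (Metric.measure_ball_pos _ _ hr).ne'
  have hV : V ≠ ⊤ := measure_ball_lt_top.ne
  set c : ℝ≥0∞ := (1 + N * ENNReal.ofReal r) ^ (m + 1)
  set I : ℝ≥0∞ :=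
    ∫⁻ t in Set.Ioc (0 : ℝ) 1, ENNReal.ofReal (t ^ m) * ENNReal.ofReal (t ^ (-s))
  have hI : I ≠ ⊤ := lintegral_pow_mul_rpow_neg_ne_top hs
  refine ⟨c * (m + 1 + I) / V, ENNReal.div_ne_top (by finiteness) hV₀, fun F x A hF hA => ?_⟩
  set J := jetNorm (m + 1) fun α => mderiv α F
  have value_le : ∫⁻ y in Metric.ball 0 r, J (x + y) ≤ A := by
    simpa using hA 1 (by simp)
  have remainder_le : ∫⁻ t in Set.Ioc (0 : ℝ) 1, ENNReal.ofReal (t ^ m) *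
      ∫⁻ y in Metric.ball 0 r, J (x + t • y) ≤ I * A := by
    rw [← lintegral_mul_const _ (by fun_prop)]
    refine setLIntegral_mono (by fun_prop) fun t ht => ?_
    rw [mul_assoc]
    exact mul_le_mul_right (hA t ht) _
  rw [← ENNReal.mul_div_right_comm, ENNReal.le_div_iff_mul_le (.inl hV₀) (.inl hV)]
  calc ‖F x‖ₑ * V
      ≤ c * ((m + 1) * (∫⁻ y in Metric.ball 0 r, J (x + y)) +
          ∫⁻ t in Set.Ioc (0 : ℝ) 1, ENNReal.ofReal (t ^ m) *
            ∫⁻ y in Metric.ball 0 r, J (x + t • y)) := enorm_mul_volume_ball_le hF m x r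
    _ ≤ c * ((m + 1) * A + I * A) := by gcongr
    _ = c * (m + 1 + I) * A := by ring

variable {E : Type*} [NormedAddCommGroup E] [NormedSpace ℝ E] [FiniteDimensional ℝ E]
  [MeasurableSpace E] [BorelSpace E] {μ : Measure E} [μ.IsAddHaarMeasure]

variable (μ) in
lemma map_add_smul_restrict_ball_le (x : E) (r : ℝ) {t : ℝ} (ht : t ∈ Set.Ioc (0 : ℝ) 1) :
    (μ.restrict (Metric.ball 0 r)).map (fun y => x + t • y) ≤
      ENNReal.ofReal (t ^ (-(Module.finrank ℝ E : ℝ))) • μ.restrict (Metric.ball x r) := by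
  have h_map : μ.map (fun y => x + t • y) =
      ENNReal.ofReal (t ^ (-(Module.finrank ℝ E : ℝ))) • μ := by
    change μ.map ((x + ·) ∘ (t • ·)) = _
    rw [← Measure.map_map (by fun_prop) (by fun_prop),
      Measure.map_addHaar_smul μ ht.1.ne', Measure.map_smul, map_add_left_eq_self,
      Real.rpow_neg ht.1.le, Real.rpow_natCast, abs_of_pos (by have := ht.1; positivity)]
  have h_sub : Metric.ball 0 r ⊆ (fun y => x + t • y) ⁻¹' Metric.ball x r := fun y hy => by
    have : t * ‖y‖ ≤ ‖y‖ := mul_le_of_le_one_left (norm_nonneg y) ht.2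
    simpa [norm_smul, abs_of_pos ht.1] using this.trans_lt (mem_ball_zero_iff.1 hy)
  rw [← Measure.restrict_smul, ← h_map, Measure.restrict_map (by fun_prop) measurableSet_ball]
  exact Measure.map_mono (Measure.restrict_mono h_sub le_rfl) (by fun_prop)

lemma setLIntegral_ball_comp_add_smul_le {p : ℝ≥0∞} (hp : 1 ≤ p) {M : E → ℝ≥0∞}
    (hM : Measurable M) (x : E) (r : ℝ) {t : ℝ} (ht : t ∈ Set.Ioc (0 : ℝ) 1) :
    ∫⁻ y in Metric.ball 0 r, M (x + t • y) ∂μ ≤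
      ENNReal.ofReal (t ^ (-(Module.finrank ℝ E / p.toReal))) *
        (μ (Metric.ball 0 r) ^ (1 - 1 / p.toReal) *
          eLpNorm M p (μ.restrict (Metric.ball x r))) := by
  have hMt : Measurable fun y => M (x + t • y) := by fun_prop
  have scaling : eLpNorm (fun y => M (x + t • y)) p (μ.restrict (Metric.ball 0 r)) ≤
      ENNReal.ofReal (t ^ (-(Module.finrank ℝ E / p.toReal))) *
        eLpNorm M p (μ.restrict (Metric.ball x r)) := by
    have h_pos : 0 < t ^ (-(Module.finrank ℝ E : ℝ)) := Real.rpow_pos_of_pos ht.1 _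
    calc eLpNorm (M ∘ fun y => x + t • y) p (μ.restrict (Metric.ball 0 r))
        = eLpNorm M p ((μ.restrict (Metric.ball 0 r)).map fun y => x + t • y) :=
          (eLpNorm_map_measure hM.aestronglyMeasurable (by fun_prop)).symm
      _ ≤ eLpNorm M p (ENNReal.ofReal (t ^ (-(Module.finrank ℝ E : ℝ))) •
            μ.restrict (Metric.ball x r)) :=
          eLpNorm_mono_measure _ (map_add_smul_restrict_ball_le μ x r ht)
      _ = _ := by
          rw [eLpNorm_smul_measure_of_ne_zero (by simpa using h_pos),
            ENNReal.ofReal_rpow_of_pos h_pos, ← Real.rpow_mul ht.1.le, smul_eq_mul]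
          simp [div_eq_mul_inv]
  calc ∫⁻ y in Metric.ball 0 r, M (x + t • y) ∂μ
      = eLpNorm (fun y => M (x + t • y)) 1 (μ.restrict (Metric.ball 0 r)) := by
        simp [eLpNorm_one_eq_lintegral_enorm]
    _ ≤ eLpNorm (fun y => M (x + t • y)) p (μ.restrict (Metric.ball 0 r)) *
          μ (Metric.ball 0 r) ^ (1 - 1 / p.toReal) := by
        simpa using eLpNorm_le_eLpNorm_mul_rpow_measure_univ
          (μ := μ.restrict (Metric.ball 0 r)) hp hMt.aestronglyMeasurable
    _ ≤ _ := by
        rw [mul_comm, mul_left_comm]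
        gcongr

lemma setLIntegral_ball_lconvolution_comp_add_smul_le {p : ℝ≥0∞} (hp : 1 ≤ p) {M ρ : E → ℝ≥0∞}
    (hM : Measurable M) (hρ : Measurable ρ) (hρ_one : ∫⁻ x, ρ x ∂μ ≤ 1) {δ : ℝ}
    (hρ_supp : Function.support ρ ⊆ Metric.ball 0 δ) (x : E) (r : ℝ) {t : ℝ}
    (ht : t ∈ Set.Ioc (0 : ℝ) 1) :
    ∫⁻ y in Metric.ball 0 r, (ρ ⋆ₗ[μ] M) (x + t • y) ∂μ ≤
      ENNReal.ofReal (t ^ (-(Module.finrank ℝ E / p.toReal))) *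
        (μ (Metric.ball 0 r) ^ (1 - 1 / p.toReal) *
          eLpNorm M p (μ.restrict (Metric.ball x (r + δ)))) := by
  set B := ENNReal.ofReal (t ^ (-(Module.finrank ℝ E / p.toReal))) *
    (μ (Metric.ball 0 r) ^ (1 - 1 / p.toReal) * eLpNorm M p (μ.restrict (Metric.ball x (r + δ))))
  have translate_le (u : E) :
      ρ u * ∫⁻ y in Metric.ball 0 r, M (-u + x + t • y) ∂μ ≤ ρ u * B := by
    by_cases hu : ρ u = 0
    · simp [hu]
    have h_sub : Metric.ball (-u + x) r ⊆ Metric.ball x (r + δ) := by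
      have := mem_ball_zero_iff.1 (hρ_supp hu)
      exact Metric.ball_subset_ball' (by simpa [dist_eq_norm] using this.le)
    refine mul_le_mul_right ((setLIntegral_ball_comp_add_smul_le hp hM _ r ht).trans ?_) _
    unfold B
    gcongr
  calc ∫⁻ y in Metric.ball 0 r, (ρ ⋆ₗ[μ] M) (x + t • y) ∂μ
      = ∫⁻ u, ρ u * ∫⁻ y in Metric.ball 0 r, M (-u + x + t • y) ∂μ ∂μ := by
        simp only [lconvolution_def, ← add_assoc]
        rw [lintegral_lintegral_swap (by fun_prop)]
        exact lintegral_congr fun u => lintegral_const_mul _ (by fun_prop)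
    _ ≤ ∫⁻ u, ρ u * B ∂μ := lintegral_mono translate_le
    _ ≤ B := by
        rw [lintegral_mul_const _ hρ]
        exact mul_le_of_le_one_left' hρ_one

end Averages

section LocalEstimate

open scoped Convolution

variable {N k : ℕ} {p : ℝ≥0∞} {f : Euc N → ℂ} {D : (Fin N → ℕ) → Euc N → ℂ}

lemma jetNorm_mderiv_convolution_le {ψ : Euc N → ℂ} (hf : LocallyIntegrable f volume)
    (hDm : ∀ α, msize α ≤ k → Measurable (D α))
    (hD : ∀ α, msize α ≤ k → IsWeakDeriv α f (D α))
    (hψ : ContDiff ℝ (⊤ : ℕ∞) ψ) (hc : HasCompactSupport ψ) (z : Euc N) :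
    jetNorm k (fun α => mderiv α (f ⋆[ContinuousLinearMap.mul ℝ ℂ, volume] ψ)) z ≤
      ((‖ψ ·‖ₑ) ⋆ₗ jetNorm k D) z := by
  have term_le {α : Fin N → ℕ} (hα : msize α ≤ k) :
      ‖mderiv α (f ⋆[ContinuousLinearMap.mul ℝ ℂ, volume] ψ) z‖ₑ ≤
        ∫⁻ u, ‖ψ u‖ₑ * ‖D α (-u + z)‖ₑ := by
    rw [(hD α hα).mderiv_convolution hf hψ hc, convolution_eq_swap]
    refine (enorm_integral_le_lintegral_enorm _).trans_eq (lintegral_congr fun u => ?_)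
    rw [ContinuousLinearMap.mul_apply', enorm_mul, mul_comm, neg_add_eq_sub]
  have hψm : Measurable ψ := hψ.continuous.measurable
  calc jetNorm k (fun α => mderiv α (f ⋆[ContinuousLinearMap.mul ℝ ℂ, volume] ψ)) z
      ≤ ∑ α ∈ multiIndices N k, ∫⁻ u, ‖ψ u‖ₑ * ‖D α (-u + z)‖ₑ :=
        Finset.sum_le_sum fun α hα => term_le (mem_multiIndices.1 hα)
    _ = ((‖ψ ·‖ₑ) ⋆ₗ jetNorm k D) z := by
        rw [← lintegral_finsetSum]
        · simp only [lconvolution_def, jetNorm, Finset.mul_sum]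
        · intro α hα
          have := hDm α (mem_multiIndices.1 hα)
          fun_prop

lemma natCast_div_toReal_lt (hp : 1 ≤ p) (hkp : (N : ℝ≥0∞) < k * p) : N / p.toReal < k := by
  rcases eq_or_ne p ⊤ with rfl | hp_top
  · have : k ≠ 0 := by
      rintro rfl
      simp at hkp
    simpa using Nat.pos_of_ne_zero this
  · have hp_pos : 0 < p.toReal := ENNReal.toReal_pos (one_pos.trans_le hp).ne' hp_top
    rw [div_lt_iff₀ hp_pos]
    simpa using (ENNReal.toReal_lt_toReal (by finiteness) (by finiteness)).2 hkp

theorem exists_ae_enorm_le_eLpNorm_jetNorm (N k : ℕ) {p : ℝ≥0∞} (hp : 1 ≤ p)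
    (hkp : (N : ℝ≥0∞) < k * p) {R : ℝ} (hR : 0 < R) :
    ∃ C : ℝ≥0∞, C ≠ ⊤ ∧ ∀ (f : Euc N → ℂ) (D : (Fin N → ℕ) → Euc N → ℂ),
      LocallyIntegrable f volume → (∀ α, msize α ≤ k → Measurable (D α)) →
      (∀ α, msize α ≤ k → IsWeakDeriv α f (D α)) →
      ∀ᵐ x, ‖f x‖ₑ ≤ C * eLpNorm (jetNorm k D) p (volume.restrict (Metric.ball x R)) := by
  obtain ⟨m, rfl⟩ : ∃ m, k = m + 1 := Nat.exists_eq_succ_of_ne_zero (by rintro rfl; simp at hkp)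
  have hs : N / p.toReal < m + 1 := by simpa using natCast_div_toReal_lt hp hkp
  obtain ⟨C, hC, h_smooth⟩ :=
    exists_enorm_le_of_lintegral_jetNorm_le (N := N) m hs (half_pos hR)
  set V : ℝ≥0∞ := volume (Metric.ball (0 : Euc N) (R / 2))
  have hV₀ : V ≠ 0 := (Metric.measure_ball_pos _ _ (half_pos hR)).ne'
  have hV : V ≠ ⊤ := measure_ball_lt_top.ne
  refine ⟨C * V ^ (1 - 1 / p.toReal), by finiteness, fun f D hf hDm hD => ?_⟩
  refine ae_enorm_le_of_forall_mollifier (half_pos hR) hf fun ψ hψ x => ?_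
  rw [mul_assoc]
  refine h_smooth _ x _ (hψ.hasCompactSupport.contDiff_convolution_right _ hf hψ.contDiff)
    fun t ht => ?_
  calc ∫⁻ y in Metric.ball 0 (R / 2), jetNorm (m + 1)
        (fun α => mderiv α (f ⋆[ContinuousLinearMap.mul ℝ ℂ, volume] ψ)) (x + t • y)
      ≤ ∫⁻ y in Metric.ball 0 (R / 2), ((‖ψ ·‖ₑ) ⋆ₗ jetNorm (m + 1) D) (x + t • y) :=
        lintegral_mono fun y =>
          jetNorm_mderiv_convolution_le hf hDm hD hψ.contDiff hψ.hasCompactSupport _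
    _ ≤ ENNReal.ofReal (t ^ (-(N / p.toReal))) * (V ^ (1 - 1 / p.toReal) *
          eLpNorm (jetNorm (m + 1) D) p (volume.restrict (Metric.ball x R))) := by
        have h_supp : Function.support (‖ψ ·‖ₑ) ⊆ Metric.ball 0 (R / 2) := by
          simpa [Function.support] using hψ.support_subset
        simpa using setLIntegral_ball_lconvolution_comp_add_smul_le (μ := volume) hp
          (measurable_jetNorm hDm) hψ.contDiff.continuous.measurable.enorm
          hψ.lintegral_enorm_le_one h_supp x (R / 2) ht

end LocalEstimate

section Weights

variable {N k : ℕ} {p : ℝ≥0∞} {w v : Euc N → ℝ} {D : (Fin N → ℕ) → Euc N → ℂ}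

lemma wLp_mono_ae {g g' : Euc N → ℂ} (h : ∀ᵐ x, ‖g x‖ₑ ≤ ‖g' x‖ₑ) : wLp p w g ≤ wLp p w g' :=
  eLpNorm_mono_enorm_ae <| h.mono fun x hx => by
    simpa only [enorm_mul, enorm_norm] using mul_le_mul_right hx _

lemma eLpNorm_exp_mul_jetNorm_le_sum_wLp (hp : 1 ≤ p) (hw : Measurable w)
    (hDm : ∀ α, msize α ≤ k → Measurable (D α)) :
    eLpNorm (fun z => ENNReal.ofReal (Real.exp (w z)) * jetNorm k D z) p volume ≤
      ∑ α ∈ multiIndices N k, wLp p w (D α) := by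
  have expand : (fun z => ENNReal.ofReal (Real.exp (w z)) * jetNorm k D z) =
      ∑ α ∈ multiIndices N k, fun z => ‖Real.exp (w z) * ‖D α z‖‖ₑ := by
    funext z
    simp [jetNorm, Finset.mul_sum, enorm_mul, Real.enorm_of_nonneg (Real.exp_nonneg _)]
  rw [expand]
  refine (eLpNorm_sum_le (fun α hα => ?_) hp).trans_eq
    (Finset.sum_congr rfl fun α _ => eLpNorm_enorm _)
  have := hDm α (mem_multiIndices.1 hα)
  exact Measurable.aestronglyMeasurable (by fun_prop)

lemma eLpNorm_restrict_le_exp_mul {X : Type*} [MeasurableSpace X] {μ : Measure X} {w : X → ℝ}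
    {M : X → ℝ≥0∞} {s : Set X} (hs : MeasurableSet s) {a : ℝ} (h : ∀ z ∈ s, w z ≤ a) :
    eLpNorm M p (μ.restrict s) ≤ ENNReal.ofReal (Real.exp a) *
      eLpNorm (fun z => ENNReal.ofReal (Real.exp (-w z)) * M z) p μ := by
  have pointwise : ∀ z ∈ s, M z ≤
      ENNReal.ofReal (Real.exp a) * (ENNReal.ofReal (Real.exp (-w z)) * M z) := fun z hz => by
    rw [← mul_assoc, ← ENNReal.ofReal_mul (Real.exp_nonneg _), ← Real.exp_add]
    refine le_mul_of_one_le_left' (ENNReal.one_le_ofReal.2 (Real.one_le_exp ?_))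
    linarith [h z hz]
  calc eLpNorm M p (μ.restrict s)
      ≤ ENNReal.ofReal (Real.exp a) *
          eLpNorm (fun z => ENNReal.ofReal (Real.exp (-w z)) * M z) p (μ.restrict s) :=
        eLpNorm_le_nnreal_smul_eLpNorm_of_ae_le_mul' (ae_restrict_of_forall_mem hs pointwise) p
    _ ≤ _ := by
        gcongr
        exact Measure.restrict_le_self

theorem exists_eLpNorm_top_le_sum_wLp (hp : 1 ≤ p) (hkp : (N : ℝ≥0∞) < k * p)
    (hw : Measurable w) {R c : ℝ} (hR : 0 < R)
    (hwv : ∀ x, ∀ z ∈ Metric.ball x R, w z ≤ v x + c) :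
    ∃ C > 0, ∀ (f : Euc N → ℂ) (D : (Fin N → ℕ) → Euc N → ℂ), LocallyIntegrable f volume →
      (∀ α, msize α ≤ k → IsWeakDeriv α f (D α)) →
      eLpNorm (fun x => Real.exp (-v x) * ‖f x‖) ⊤ volume ≤
        ENNReal.ofReal C * ∑ α ∈ multiIndices N k, wLp p (fun x => -w x) (D α) := by
  obtain ⟨C, hC, h_local⟩ := exists_ae_enorm_le_eLpNorm_jetNorm N k hp hkp hR
  have h_top : C * ENNReal.ofReal (Real.exp c) ≠ ⊤ := by finiteness
  refine ⟨(C * ENNReal.ofReal (Real.exp c)).toReal + 1, by positivity, fun f D hf hD => ?_⟩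
  choose! D' hD'm hD' hD'_le using fun α hα => (hD α hα).exists_measurable_enorm_le hf
  set S := ∑ α ∈ multiIndices N k, wLp p (fun x => -w x) (D α)
  have h_global : eLpNorm (fun z => ENNReal.ofReal (Real.exp (-w z)) * jetNorm k D' z) p volume ≤
      S :=
    (eLpNorm_exp_mul_jetNorm_le_sum_wLp hp hw.neg hD'm).trans <|
      Finset.sum_le_sum fun α hα => wLp_mono_ae (hD'_le α (mem_multiIndices.1 hα))
  have h_weighted : ∀ᵐ x, ‖Real.exp (-v x) * ‖f x‖‖ₑ ≤ C * ENNReal.ofReal (Real.exp c) * S := by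
    filter_upwards [h_local f D' hf hD'm hD'] with x hx
    calc ‖Real.exp (-v x) * ‖f x‖‖ₑ
        = ENNReal.ofReal (Real.exp (-v x)) * ‖f x‖ₑ := by
          rw [enorm_mul, enorm_norm, Real.enorm_of_nonneg (Real.exp_nonneg _)]
      _ ≤ ENNReal.ofReal (Real.exp (-v x)) *
            (C * (ENNReal.ofReal (Real.exp (v x + c)) * S)) := by
          gcongr
          refine hx.trans ?_
          gcongr
          refine (eLpNorm_restrict_le_exp_mul measurableSet_ball (hwv x)).trans ?_
          gcongr
      _ = C * (ENNReal.ofReal (Real.exp (-v x)) * ENNReal.ofReal (Real.exp (v x + c))) * S := by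
          ring
      _ = C * ENNReal.ofReal (Real.exp c) * S := by
          rw [← ENNReal.ofReal_mul (Real.exp_nonneg _), ← Real.exp_add, neg_add_cancel_left]
  calc eLpNorm (fun x => Real.exp (-v x) * ‖f x‖) ⊤ volume
      ≤ C * ENNReal.ofReal (Real.exp c) * S := by
        rw [eLpNorm_exponent_top]
        exact eLpNormEssSup_le_of_ae_enorm_bound h_weighted
    _ ≤ _ := by
        gcongr
        exact (ENNReal.le_ofReal_iff_toReal_le h_top (by positivity)).2 (by linarith)

end Weights

section Doubling

variable {ω : ℝ → ℝ} {K : ℝ}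

lemma measurable_comp_norm_of_monotoneOn {E : Type*} [NormedAddCommGroup E] [MeasurableSpace E]
    [OpensMeasurableSpace E] (hω : MonotoneOn ω (Set.Ici 0)) :
    Measurable fun x : E => ω ‖x‖ := by
  have h_mono : Monotone fun t => ω (max t 0) := fun s t hst =>
    hω (le_max_right s 0) (le_max_right t 0) (max_le_max_right 0 hst)
  simpa [Function.comp_def] using h_mono.measurable.comp (measurable_norm (α := E))

lemma le_mul_of_doubling_of_le_add_one (hω : MonotoneOn ω (Set.Ici 0)) (hK : 0 ≤ K)
    (h_double : ∀ t ≥ 0, ω (2 * t) ≤ K * (1 + ω t)) {s t : ℝ} (hs : 0 ≤ s) (ht : 0 ≤ t)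
    (hst : s ≤ t + 1) : ω s ≤ K * (1 + ω 1 - ω 0 + ω t) := by
  have h_max : 0 ≤ max t 1 := le_max_of_le_left ht
  calc ω s ≤ ω (2 * max t 1) :=
        hω hs (by simp) (by linarith [le_max_left t 1, le_max_right t 1])
    _ ≤ K * (1 + ω (max t 1)) := h_double _ h_max
    _ ≤ K * (1 + ω 1 - ω 0 + ω t) := by
        have h_zero_t : ω 0 ≤ ω t := hω Set.self_mem_Ici ht ht
        have h_zero_one : ω 0 ≤ ω 1 := hω Set.self_mem_Ici (Set.mem_Ici.2 zero_le_one) zero_le_one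
        have : ω (max t 1) ≤ ω 1 - ω 0 + ω t := by
          rcases max_choice t 1 with h | h <;> rw [h] <;> linarith
        exact mul_le_mul_of_nonneg_left (by linarith) hK

lemma exists_mul_le_natCast_mul_add_of_doubling (hω : MonotoneOn ω (Set.Ici 0)) (hK : 0 ≤ K)
    (h_double : ∀ t ≥ 0, ω (2 * t) ≤ K * (1 + ω t)) (n : ℕ) :
    ∃ n' : ℕ, n ≤ n' ∧ ∃ c : ℝ, ∀ s t, 0 ≤ s → 0 ≤ t → s ≤ t + 1 → n * ω s ≤ n' * ω t + c := by
  refine ⟨n + ⌈n * K⌉₊, Nat.le_add_right _ _,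
    n * K * (1 + ω 1 - ω 0) + (n * K - (n + ⌈n * K⌉₊ : ℕ)) * ω 0, fun s t hs ht hst => ?_⟩
  have h_coeff : n * K ≤ (n + ⌈n * K⌉₊ : ℕ) := by
    push_cast
    linarith [Nat.le_ceil (n * K), (n.cast_nonneg : (0 : ℝ) ≤ n)]
  have h_step := mul_le_mul_of_nonneg_left
    (le_mul_of_doubling_of_le_add_one hω hK h_double hs ht hst) n.cast_nonneg
  have h_zero := mul_le_mul_of_nonneg_left (hω Set.self_mem_Ici ht ht) (sub_nonneg.2 h_coeff)
  linarith

end Doubling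

theorem weighted_morrey_general {N : ℕ} {ω : ℝ → ℝ} (hω : MonotoneOn ω (Set.Ici 0)) {K : ℝ}
    (hK : 0 ≤ K) (h_double : ∀ t ≥ 0, ω (2 * t) ≤ K * (1 + ω t)) (n k : ℕ) {p : ℝ≥0∞}
    (hp : 1 ≤ p) (hkp : (N : ℝ≥0∞) < k * p) :
    ∃ n' : ℕ, n ≤ n' ∧ ∃ C > 0, ∀ (f : Euc N → ℂ) (D : (Fin N → ℕ) → Euc N → ℂ),
      LocallyIntegrable f volume → (∀ α, msize α ≤ k → IsWeakDeriv α f (D α)) →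
      eLpNorm (fun x => Real.exp (-(n' * ω ‖x‖)) * ‖f x‖) ⊤ volume ≤
        ENNReal.ofReal C *
          ∑' α, if msize α ≤ k then wLp p (fun x => -(n * ω ‖x‖)) (D α) else 0 := by
  obtain ⟨n', hn, c, hc⟩ := exists_mul_le_natCast_mul_add_of_doubling hω hK h_double n
  simp only [tsum_ite_msize_le]
  refine ⟨n', hn, exists_eLpNorm_top_le_sum_wLp hp hkp
    ((measurable_comp_norm_of_monotoneOn hω).const_mul _) one_pos fun x z hz =>
      hc _ _ (norm_nonneg z) (norm_nonneg x) ?_⟩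
  linarith [norm_le_norm_add_norm_sub' z x, mem_ball_iff_norm.1 hz]

/-- Weighted Sobolev/Morrey embedding: if `kp > N` then, for some `n' ≥ n` and `C > 0`
depending only on `n, N, k, p`, every `f ∈ W^{k,p}(ℝ^N, e^{-nω(|x|)}dx)` satisfies
`‖f e^{-n'ω}‖_∞ ≤ C ‖f‖_{k,p,e^{-nω}}`. -/
theorem weighted_morrey
    {N : ℕ} (ω : ℝ → ℝ) (hω : IsWeightFun ω)
    (n k : ℕ) (hk : 0 < k) (p : ℝ) (hp : 1 ≤ p) (hkp : (N : ℝ) < k * p) :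
    ∃ n' : ℕ, n ≤ n' ∧ ∃ C > 0,
      ∀ (f : Euc N → ℂ) (D : (Fin N → ℕ) → Euc N → ℂ),
        LocallyIntegrable f volume →
        D (fun _ => 0) = f →
        (∀ α : Fin N → ℕ, msize α ≤ k → IsWeakDeriv α f (D α)) →
        eLpNorm (fun x => Real.exp (-((n' : ℝ) * ω ‖x‖)) * ‖f x‖) ⊤ volume ≤
          ENNReal.ofReal C *
            ∑' α : Fin N → ℕ,
              (if msize α ≤ k then
                wLp (ENNReal.ofReal p) (fun x => -((n : ℝ) * ω ‖x‖)) (D α) else 0) := by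
  obtain ⟨K, hK, h_double⟩ := hω.alpha
  have hkp' : (N : ℝ≥0∞) < k * ENNReal.ofReal p := by
    simpa [ENNReal.ofReal_mul] using (ENNReal.ofReal_lt_ofReal_iff_of_nonneg N.cast_nonneg).2 hkp
  obtain ⟨n', hn, C, hC, h⟩ := weighted_morrey_general hω.mono (zero_le_one.trans hK) h_double n k
    (ENNReal.one_le_ofReal.2 hp) hkp'
  exact ⟨n', hn, C, hC, fun f D hf _ hD => h f D hf hD⟩
end
end

section
/- Every continuous linear functional T on the Banach space (O^m_{n,ω,p}(ℝ^N), r_{m,n,p}) (1 < p < ∞) admits a representation T = Σ_{α∈ℕ₀^N} ∂^α f_α, where the f_α are measurable functions with Σ_α ‖e^{nω} f_α‖_{p'}^{p'} exp(p'm φ*(|α|/m)) < ∞ and derivatives are taken distributionally; i.e. T(φ) = Σ_α (−1)^{|α|} ∫_{ℝ^N} f_α(x) ∂^α φ(x) dx for all φ ∈ O^m_{n,ω,p}(ℝ^N). -/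
open MeasureTheory Real ENNReal Filter

noncomputable section

/-- The norm `r_{m,n,p}` of the space `O^m_{n,ω,p}(ℝ^N)`. -/
def rnorm {N : ℕ} (ω : ℝ → ℝ) (m : ℕ) (n : ℤ) (p : ℝ) (f : Euc N → ℂ) : ℝ≥0∞ :=
  (∑' α : Fin N → ℕ,
    (wLp (ENNReal.ofReal p) (fun x => -((n : ℝ) * ω ‖x‖)) (mderiv α f)) ^ p *
      ENNReal.ofReal (Real.exp (-((m : ℝ) * p * phiStar ω ((msize α : ℝ) / m))))) ^ (1/p)

/-- Membership in `O^m_{n,ω,p}(ℝ^N)`. -/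
def memO {N : ℕ} (ω : ℝ → ℝ) (m : ℕ) (n : ℤ) (p : ℝ) (φ : Euc N → ℂ) : Prop :=
  ContDiff ℝ (⊤ : ℕ∞) φ ∧ rnorm ω m n p φ < ⊤

/-!
The weighted jet `φ ↦ {(-1)^{|α|} e^{-m φ*(|α|/m) - nω} ∂^α φ}_α` embeds `O^m_{n,ω,p}` isometrically
into the `ℓ^p`-sum over `α` of copies of `L^p(ℝ^N)`, which is the `L^p` space of the σ-finite
measure `count × volume` on `ℕ₀^N × ℝ^N`. By Hahn–Banach, `T` extends to this `L^p` space, so by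
Riesz representation `T` is integration of the jet against some `h ∈ L^{p'}`; the functions
`f_α = e^{-m φ*(|α|/m) - nω} h_α` represent `T`.

For the Riesz theorem on a finite measure, the Radon–Nikodym density `g` of `A ↦ L 1_A` represents
`L`. Each truncation `1_{|g| ≤ k} g` represents `L` composed with multiplication by an indicator
function, so its `L^{p'}` norm is at most `‖L‖`; Fatou's lemma then gives `g ∈ L^{p'}`. The σ-finite
case follows because `u ↦ ρ^{1/p} u` identifies `L^p(ρ μ)` with `L^p(μ)` for a positive density `ρ`
with `ρ μ` finite.
-/

open scoped NNReal Topology symmDiff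

section IndicatorConstLp

variable {X E : Type*} [MeasurableSpace X] {μ : Measure X} {p : ℝ≥0∞} [NormedAddCommGroup E]

theorem indicatorConstLp_const_smul {𝕜 : Type*} [NormedRing 𝕜] [Module 𝕜 E] [IsBoundedSMul 𝕜 E]
    {A : Set X} (hA : MeasurableSet A) (hμA : μ A ≠ ⊤) (a : 𝕜) (c : E) :
    indicatorConstLp p hA hμA (a • c) = a • indicatorConstLp p hA hμA c := by
  simp only [indicatorConstLp, ← MemLp.toLp_const_smul]
  exact MemLp.toLp_congr _ _ (.of_forall fun x => Set.indicator_const_smul_apply A a (fun _ => c) x)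

theorem indicatorConstLp_biUnion_finset {A : ℕ → Set X} (hA : ∀ i, MeasurableSet (A i))
    (hμA : ∀ i, μ (A i) ≠ ⊤) (hd : Pairwise (Function.onFun Disjoint A)) (c : E) (s : Finset ℕ)
    (hμs : μ (⋃ i ∈ s, A i) ≠ ⊤) :
    indicatorConstLp p (s.measurableSet_biUnion fun i _ => hA i) hμs c
      = ∑ i ∈ s, indicatorConstLp p (hA i) (hμA i) c := by
  induction s using Finset.induction_on with
  | empty => simp
  | insert a s ha ih =>
    have hμs' : μ (⋃ i ∈ s, A i) ≠ ⊤ :=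
      measure_ne_top_of_subset (Set.biUnion_subset_biUnion_left (s.subset_insert a)) hμs
    have hdisj : Disjoint (A a) (⋃ i ∈ s, A i) :=
      Set.disjoint_iUnion₂_right.2 fun i hi => hd (ne_of_mem_of_not_mem hi ha).symm
    rw [Finset.sum_insert ha, ← ih hμs', ← indicatorConstLp_disjoint_union _ _ _ _ hdisj]
    simp only [Finset.set_biUnion_insert]

theorem hasSum_indicatorConstLp_iUnion [Fact (1 ≤ p)] (hp : p ≠ ⊤) {A : ℕ → Set X}
    (hA : ∀ i, MeasurableSet (A i)) (hd : Pairwise (Function.onFun Disjoint A))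
    (hμA : μ (⋃ i, A i) ≠ ⊤) (c : E) :
    HasSum (fun i => indicatorConstLp p (hA i)
        (measure_ne_top_of_subset (Set.subset_iUnion A i) hμA) c)
      (indicatorConstLp p (.iUnion hA) hμA c) := by
  have hμs (s : Finset ℕ) : μ (⋃ i ∈ s, A i) ≠ ⊤ :=
    measure_ne_top_of_subset (Set.iUnion₂_subset_iUnion _ _) hμA
  have hle (s : Finset ℕ) :
      μ ((⋃ i ∈ s, A i) ∆ ⋃ i, A i) ≤ ∑' i : {i // i ∉ s}, μ (A i) := by
    rw [symmDiff_of_le (Set.iUnion₂_subset_iUnion _ _)]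
    refine (measure_mono ?_).trans (measure_iUnion_le _)
    rintro x ⟨hx, hxs⟩
    obtain ⟨i, hi⟩ := Set.mem_iUnion.1 hx
    exact Set.mem_iUnion.2 ⟨⟨i, fun his => hxs (Set.mem_biUnion his hi)⟩, hi⟩
  have htail : Tendsto (fun s : Finset ℕ => ∑' i : {i // i ∉ s}, μ (A i)) atTop (𝓝 0) :=
    ENNReal.tendsto_tsum_compl_atTop_zero (measure_iUnion hd hA ▸ hμA)
  simp only [HasSum, SummationFilter.unconditional_filter,
    ← indicatorConstLp_biUnion_finset hA _ hd c _ (hμs _)]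
  exact tendsto_indicatorConstLp_set hp
    (tendsto_of_tendsto_of_tendsto_of_le_of_le tendsto_const_nhds htail (fun _ => zero_le) hle)

theorem lpCLM_ext_indicatorConstLp {𝕜 F : Type*} [NormedField 𝕜] [TopologicalSpace F] [T2Space F]
    [AddCommMonoid F] [Module 𝕜 F] [Fact (1 ≤ p)] (hp : p ≠ ⊤) {L M : Lp 𝕜 p μ →L[𝕜] F}
    (h : ∀ (A : Set X) (hA : MeasurableSet A) (hμA : μ A ≠ ⊤),
      L (indicatorConstLp p hA hμA 1) = M (indicatorConstLp p hA hμA 1)) : L = M := by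
  ext u
  refine Lp.induction hp (fun u => L u = M u) (fun c A hA hμA => ?_) ?_
    (isClosed_eq L.continuous M.continuous) u
  · rw [Lp.simpleFunc.coe_indicatorConst, ← mul_one c, ← smul_eq_mul, indicatorConstLp_const_smul,
      map_smul, map_smul, h]
  · intro f g hf hg _ hLf hLg
    rw [map_add, map_add, hLf, hLg]

end IndicatorConstLp

section RadonNikodym

variable {X : Type*} [MeasurableSpace X]

theorem withDensityᵥ_complexMeasure_rnDeriv_eq (c : ComplexMeasure X) (μ : Measure X)
    [SigmaFinite μ] (hc : c ≪ᵥ μ.toENNRealVectorMeasure) :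
    μ.withDensityᵥ (c.rnDeriv μ) = c := by
  have hre : c.re ≪ᵥ μ.toENNRealVectorMeasure := fun A hA =>
    congrArg Complex.re (hc hA)
  have him : c.im ≪ᵥ μ.toENNRealVectorMeasure := fun A hA =>
    congrArg Complex.im (hc hA)
  have hint := c.integrable_rnDeriv μ
  ext A hA
  rw [withDensityᵥ_apply hint hA]
  apply Complex.ext
  · rw [← RCLike.re_eq_complex_re, ← integral_re hint.integrableOn]
    change ∫ x in A, c.re.rnDeriv μ x ∂μ = c.re A
    rw [← withDensityᵥ_apply (SignedMeasure.integrable_rnDeriv _ _) hA,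
      SignedMeasure.withDensityᵥ_rnDeriv_eq _ _ hre]
  · rw [← RCLike.im_eq_complex_im, ← integral_im hint.integrableOn]
    change ∫ x in A, c.im.rnDeriv μ x ∂μ = c.im A
    rw [← withDensityᵥ_apply (SignedMeasure.integrable_rnDeriv _ _) hA,
      SignedMeasure.withDensityᵥ_rnDeriv_eq _ _ him]

variable {μ : Measure X} {p : ℝ≥0∞} [Fact (1 ≤ p)]

/-- The complex measure `A ↦ L 1_A` attached to a functional `L` on `L^p` of a finite measure;
the set function has to be extended by `0` to the non-measurable sets. -/
def lpDualMeasure [IsFiniteMeasure μ] (hp : p ≠ ⊤) (L : StrongDual ℂ (Lp ℂ p μ)) :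
    ComplexMeasure X where
  measureOf' A := open Classical in
    if hA : MeasurableSet A then L (indicatorConstLp p hA (measure_ne_top μ A) 1) else 0
  empty' := by simp
  not_measurable' A hA := dif_neg hA
  m_iUnion' A hA hd := by
    simp only [hA, MeasurableSet.iUnion hA, dif_pos]
    exact (hasSum_indicatorConstLp_iUnion hp hA hd (measure_ne_top μ _) 1).mapL L

theorem lpDualMeasure_apply [IsFiniteMeasure μ] (hp : p ≠ ⊤) (L : StrongDual ℂ (Lp ℂ p μ))
    {A : Set X} (hA : MeasurableSet A) :
    lpDualMeasure hp L A = L (indicatorConstLp p hA (measure_ne_top μ A) 1) :=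
  dif_pos hA

theorem lpDualMeasure_absolutelyContinuous [IsFiniteMeasure μ] (hp : p ≠ ⊤)
    (L : StrongDual ℂ (Lp ℂ p μ)) : lpDualMeasure hp L ≪ᵥ μ.toENNRealVectorMeasure := by
  refine VectorMeasure.AbsolutelyContinuous.mk fun A hA hμA => ?_
  rw [Measure.toENNRealVectorMeasure_apply_measurable hA] at hμA
  have hzero : indicatorConstLp p hA (measure_ne_top μ A) (1 : ℂ) = 0 := by
    rw [← indicatorConstLp_empty (p := p) (μ := μ) (c := (1 : ℂ))]
    exact MemLp.toLp_congr _ _ (indicator_ae_eq_of_ae_eq_set (ae_eq_empty.2 hμA))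
  rw [lpDualMeasure_apply hp L hA, hzero, map_zero]

theorem exists_integrable_eq_setIntegral_of_lpDual [IsFiniteMeasure μ] (hp : p ≠ ⊤)
    (L : StrongDual ℂ (Lp ℂ p μ)) :
    ∃ g : X → ℂ, StronglyMeasurable g ∧ Integrable g μ ∧ ∀ (A : Set X) (hA : MeasurableSet A),
      L (indicatorConstLp p hA (measure_ne_top μ A) 1) = ∫ x in A, g x ∂μ := by
  have hint := (lpDualMeasure hp L).integrable_rnDeriv μ
  refine ⟨hint.1.mk _, hint.1.stronglyMeasurable_mk, hint.congr hint.1.ae_eq_mk, fun A hA => ?_⟩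
  rw [← integral_congr_ae (ae_restrict_of_ae hint.1.ae_eq_mk), ← withDensityᵥ_apply hint hA,
    withDensityᵥ_complexMeasure_rnDeriv_eq _ _ (lpDualMeasure_absolutelyContinuous hp L),
    lpDualMeasure_apply]

end RadonNikodym

section Pairing

variable {X 𝕜 : Type*} [MeasurableSpace X] {μ : Measure X} {p q : ℝ≥0∞} [RCLike 𝕜]
  [Fact (1 ≤ p)]

/-- Multiplication by the indicator function of `A`, as an operator on `L^p`. -/
def lpMulIndicator {A : Set X} (hA : MeasurableSet A) (hμA : μ A ≠ ⊤) : Lp 𝕜 p μ →L[𝕜] Lp 𝕜 p μ :=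
  (ContinuousLinearMap.mul 𝕜 𝕜).holderL μ ⊤ p p (indicatorConstLp ⊤ hA hμA 1)

theorem norm_lpMulIndicator_le {A : Set X} (hA : MeasurableSet A) (hμA : μ A ≠ ⊤) :
    ‖lpMulIndicator (𝕜 := 𝕜) (p := p) hA hμA‖ ≤ 1 := by
  have hind : ‖indicatorConstLp ⊤ hA hμA (1 : 𝕜)‖ ≤ 1 := by
    simpa using norm_indicatorConstLp_le (p := ⊤) (hs := hA) (hμs := hμA) (c := (1 : 𝕜))
  have hmul : ‖(ContinuousLinearMap.mul 𝕜 𝕜).holderL μ ⊤ p p‖ ≤ 1 :=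
    (ContinuousLinearMap.norm_holderL_le _).trans (ContinuousLinearMap.opNorm_mul_le 𝕜 𝕜)
  exact (ContinuousLinearMap.le_opNorm_of_le _ hind).trans (by simpa using hmul)

theorem lpMulIndicator_indicatorConstLp {A B : Set X} (hA : MeasurableSet A) (hμA : μ A ≠ ⊤)
    (hB : MeasurableSet B) (hμB : μ B ≠ ⊤) :
    lpMulIndicator hA hμA (indicatorConstLp p hB hμB (1 : 𝕜))
      = indicatorConstLp p (hB.inter hA) (measure_inter_ne_top_of_left_ne_top hμB) 1 := by
  ext1
  rw [lpMulIndicator, ContinuousLinearMap.holderL_apply_apply]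
  filter_upwards [ContinuousLinearMap.coeFn_holder (r := p) (ContinuousLinearMap.mul 𝕜 𝕜)
      (indicatorConstLp ⊤ hA hμA 1) (indicatorConstLp p hB hμB 1),
    indicatorConstLp_coeFn (p := ⊤) (hs := hA) (hμs := hμA) (c := (1 : 𝕜)),
    indicatorConstLp_coeFn (p := p) (hs := hB) (hμs := hμB) (c := (1 : 𝕜)),
    indicatorConstLp_coeFn (p := p) (hs := hB.inter hA)
      (hμs := measure_inter_ne_top_of_left_ne_top hμB) (c := (1 : 𝕜))] with x hx hxA hxB hxAB
  rw [hx, hxA, hxB, hxAB, ContinuousLinearMap.mul_apply', ← Set.inter_indicator_mul,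
    Set.inter_comm, mul_one]

/-- The pairing `⟨g, u⟩ = ∫ g u` of `L^q` with `L^p`, as a map from `L^q` to the dual of `L^p`. -/
abbrev lpMulPairing (𝕜 : Type*) [RCLike 𝕜] (μ : Measure X) (q p : ℝ≥0∞) [Fact (1 ≤ q)]
    [Fact (1 ≤ p)] [q.HolderConjugate p] : Lp 𝕜 q μ →L[𝕜] StrongDual 𝕜 (Lp 𝕜 p μ) :=
  (ContinuousLinearMap.mul 𝕜 𝕜).lpPairing μ q p

variable [Fact (1 ≤ q)] [q.HolderConjugate p]

theorem lpMulPairing_apply (g : Lp 𝕜 q μ) (u : Lp 𝕜 p μ) :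
    lpMulPairing 𝕜 μ q p g u = ∫ x, g x * u x ∂μ :=
  ContinuousLinearMap.lpPairing_eq_integral _ g u

theorem lpMulPairing_toLp {g u : X → 𝕜} (hg : MemLp g q μ) (hu : MemLp u p μ) :
    lpMulPairing 𝕜 μ q p (hg.toLp g) (hu.toLp u) = ∫ x, g x * u x ∂μ := by
  rw [lpMulPairing_apply]
  exact integral_congr_ae (hg.coeFn_toLp.mul hu.coeFn_toLp)

theorem lpMulPairing_toLp_indicatorConstLp {g : X → 𝕜} (hg : MemLp g q μ) {A : Set X}
    (hA : MeasurableSet A) (hμA : μ A ≠ ⊤) :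
    lpMulPairing 𝕜 μ q p (hg.toLp g) (indicatorConstLp p hA hμA 1) = ∫ x in A, g x ∂μ := by
  rw [indicatorConstLp, lpMulPairing_toLp, ← integral_indicator hA]
  simp only [← Set.indicator_mul_right, mul_one]

end Pairing

section DualityMap

variable {X 𝕜 : Type*} [MeasurableSpace X] {μ : Measure X} [RCLike 𝕜]

/-- The scalar duality map `z ↦ \bar z |z|^{r-2}`: it turns `g ∈ L^r` into the function that
attains equality in Hölder's inequality for `g`. -/
def scalarDualityMap (r : ℝ) (z : 𝕜) : 𝕜 :=
  star z * ((‖z‖ ^ (r - 2) : ℝ) : 𝕜)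

theorem norm_scalarDualityMap {r : ℝ} (hr : r ≠ 1) (z : 𝕜) :
    ‖scalarDualityMap r z‖ = ‖z‖ ^ (r - 1) := by
  rcases eq_or_ne z 0 with rfl | hz
  · simp [scalarDualityMap, Real.zero_rpow (sub_ne_zero.2 hr)]
  · rw [scalarDualityMap, norm_mul, norm_star, RCLike.norm_ofReal, abs_of_nonneg (by positivity),
      ← Real.rpow_one_add' (norm_nonneg z) (by contrapose! hr; linarith)]
    ring_nf

theorem mul_scalarDualityMap {r : ℝ} (hr : r ≠ 0) (z : 𝕜) :
    z * scalarDualityMap r z = ((‖z‖ ^ r : ℝ) : 𝕜) := by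
  rcases eq_or_ne z 0 with rfl | hz
  · simp [Real.zero_rpow hr]
  · rw [scalarDualityMap, ← mul_assoc, RCLike.star_def, RCLike.mul_conj, ← RCLike.ofReal_pow,
      ← RCLike.ofReal_mul, ← Real.rpow_natCast, ← Real.rpow_add (norm_pos_iff.2 hz)]
    norm_num

theorem measurable_scalarDualityMap (r : ℝ) : Measurable (scalarDualityMap r : 𝕜 → 𝕜) :=
  continuous_star.measurable.mul (RCLike.measurable_ofReal.comp (measurable_norm.pow_const _))

theorem eLpNorm_scalarDualityMap_comp {p q : ℝ≥0∞} [q.HolderConjugate p] (hp : p ≠ ⊤) (hq : q ≠ ⊤)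
    (g : X → 𝕜) :
    eLpNorm (fun x => scalarDualityMap q.toReal (g x)) p μ = eLpNorm g q μ ^ (q.toReal - 1) := by
  have hqp := HolderConjugate.toReal_of_ne_top hq hp
  have hexp : p * ENNReal.ofReal (q.toReal - 1) = q := by
    rw [← ENNReal.ofReal_toReal hp, ← ENNReal.ofReal_mul toReal_nonneg, mul_comm,
      hqp.sub_one_mul_conj, ENNReal.ofReal_toReal hq]
  rw [← eLpNorm_congr_norm_ae (f := fun x => ‖g x‖ ^ (q.toReal - 1)) (.of_forall fun x => by
    rw [norm_scalarDualityMap hqp.lt.ne', Real.norm_of_nonneg (by positivity)]),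
    eLpNorm_norm_rpow g hqp.sub_one_pos, hexp]

theorem lpMulPairing_scalarDualityMap {p q : ℝ≥0∞} [Fact (1 ≤ p)] [Fact (1 ≤ q)]
    [q.HolderConjugate p] (hq : q ≠ ⊤) (g : Lp 𝕜 q μ)
    (hu : MemLp (fun x => scalarDualityMap q.toReal (g x)) p μ) :
    lpMulPairing 𝕜 μ q p g (hu.toLp _) = ((‖g‖ ^ q.toReal : ℝ) : 𝕜) := by
  have hq_pos : 0 < q.toReal := toReal_pos (HolderConjugate.ne_zero q p) hq
  have hint : 0 ≤ ∫ x, ‖g x‖ ^ q.toReal ∂μ := integral_nonneg fun x => by positivity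
  calc lpMulPairing 𝕜 μ q p g (hu.toLp _)
      = lpMulPairing 𝕜 μ q p ((Lp.memLp g).toLp g) (hu.toLp _) := by rw [Lp.toLp_coeFn]
    _ = ((∫ x, ‖g x‖ ^ q.toReal ∂μ : ℝ) : 𝕜) := by
        simp only [lpMulPairing_toLp, mul_scalarDualityMap hq_pos.ne', integral_ofReal]
    _ = ((‖g‖ ^ q.toReal : ℝ) : 𝕜) := by
        rw [Lp.norm_def,
          (Lp.memLp g).eLpNorm_eq_integral_rpow_norm (HolderConjugate.ne_zero q p) hq,
          toReal_ofReal (by positivity), Real.rpow_inv_rpow hint hq_pos.ne']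

theorem norm_le_norm_lpMulPairing {p q : ℝ≥0∞} [Fact (1 ≤ p)] [Fact (1 ≤ q)]
    [q.HolderConjugate p] (hp : p ≠ ⊤) (hq : q ≠ ⊤) (g : Lp 𝕜 q μ) :
    ‖g‖ ≤ ‖lpMulPairing 𝕜 μ q p g‖ := by
  rcases eq_or_ne g 0 with rfl | hg
  · simp only [norm_zero, norm_nonneg]
  have hqp := HolderConjugate.toReal_of_ne_top hq hp
  have hnorm := eLpNorm_scalarDualityMap_comp hp hq (μ := μ) g
  have hu : MemLp (fun x => scalarDualityMap q.toReal (g x)) p μ :=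
    ⟨((measurable_scalarDualityMap _).comp_aemeasurable
      (Lp.aestronglyMeasurable g).aemeasurable).aestronglyMeasurable, hnorm ▸
      ENNReal.rpow_lt_top_of_nonneg hqp.sub_one_pos.le (Lp.eLpNorm_ne_top g)⟩
  have hu_norm : ‖hu.toLp _‖ = ‖g‖ ^ (q.toReal - 1) := by
    rw [Lp.norm_toLp, hnorm, ← ENNReal.toReal_rpow, Lp.norm_def]
  refine le_of_mul_le_mul_right ?_ (Real.rpow_pos_of_pos (norm_pos_iff.2 hg) (q.toReal - 1))
  calc ‖g‖ * ‖g‖ ^ (q.toReal - 1) = ‖lpMulPairing 𝕜 μ q p g (hu.toLp _)‖ := by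
        rw [lpMulPairing_scalarDualityMap hq, RCLike.norm_ofReal, abs_of_nonneg (by positivity),
          ← Real.rpow_one_add' (norm_nonneg g) (by linarith [hqp.pos]), add_sub_cancel]
    _ ≤ ‖lpMulPairing 𝕜 μ q p g‖ * ‖g‖ ^ (q.toReal - 1) :=
        hu_norm ▸ ContinuousLinearMap.le_opNorm _ _

end DualityMap

section FiniteRiesz

variable {X : Type*} [MeasurableSpace X] {μ : Measure X} [IsFiniteMeasure μ] {p q : ℝ≥0∞}
  [Fact (1 ≤ p)] [Fact (1 ≤ q)] [q.HolderConjugate p]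

theorem eLpNorm_indicator_le_of_lpDual_eq_setIntegral (hp : p ≠ ⊤) (hq : q ≠ ⊤)
    {L : StrongDual ℂ (Lp ℂ p μ)} {g : X → ℂ}
    (hL : ∀ (A : Set X) (hA : MeasurableSet A),
      L (indicatorConstLp p hA (measure_ne_top μ A) 1) = ∫ x in A, g x ∂μ)
    {A : Set X} (hA : MeasurableSet A) (hg : MemLp (A.indicator g) q μ) :
    eLpNorm (A.indicator g) q μ ≤ ENNReal.ofReal ‖L‖ := by
  have hμA := measure_ne_top μ A
  have hpair : lpMulPairing ℂ μ q p (hg.toLp _)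
      = L.comp (lpMulIndicator hA hμA) := by
    refine lpCLM_ext_indicatorConstLp hp fun B hB hμB => ?_
    rw [lpMulPairing_toLp_indicatorConstLp, setIntegral_indicator hA,
      ContinuousLinearMap.comp_apply, lpMulIndicator_indicatorConstLp, hL]
  have hnorm : ‖hg.toLp (A.indicator g)‖ ≤ ‖L‖ :=
    calc ‖hg.toLp (A.indicator g)‖ ≤ ‖L.comp (lpMulIndicator hA hμA)‖ :=
          hpair ▸ norm_le_norm_lpMulPairing hp hq _
      _ ≤ ‖L‖ * ‖lpMulIndicator (𝕜 := ℂ) (p := p) hA hμA‖ := L.opNorm_comp_le _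
      _ ≤ ‖L‖ := mul_le_of_le_one_right (norm_nonneg L) (norm_lpMulIndicator_le hA hμA)
  rw [Lp.norm_toLp] at hnorm
  exact (ENNReal.le_ofReal_iff_toReal_le hg.2.ne (norm_nonneg L)).2 hnorm

theorem memLp_of_lpDual_eq_setIntegral (hp : p ≠ ⊤) (hq : q ≠ ⊤)
    {L : StrongDual ℂ (Lp ℂ p μ)} {g : X → ℂ} (hg : StronglyMeasurable g)
    (hL : ∀ (A : Set X) (hA : MeasurableSet A),
      L (indicatorConstLp p hA (measure_ne_top μ A) 1) = ∫ x in A, g x ∂μ) :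
    MemLp g q μ := by
  let A (k : ℕ) : Set X := {x | ‖g x‖ ≤ k}
  have hA (k : ℕ) : MeasurableSet (A k) := hg.norm.measurable measurableSet_Iic
  have hgA (k : ℕ) : MemLp ((A k).indicator g) q μ := by
    refine .of_bound (hg.indicator (hA k)).aestronglyMeasurable k (.of_forall fun x => ?_)
    exact Set.indicator_rel_indicator (r := fun a _ => ‖a‖ ≤ k) (g := g) (by simp) id
  have hlim (x : X) : Tendsto (fun k => (A k).indicator g x) atTop (𝓝 (g x)) := by
    obtain ⟨k₀, hk₀⟩ := exists_nat_ge ‖g x‖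
    refine tendsto_const_nhds.congr' ?_
    filter_upwards [eventually_ge_atTop k₀] with k hk
    exact (Set.indicator_of_mem (show x ∈ A k from hk₀.trans (Nat.cast_le.2 hk)) g).symm
  refine ⟨hg.aestronglyMeasurable, ?_⟩
  calc eLpNorm g q μ
      ≤ liminf (fun k => eLpNorm ((A k).indicator g) q μ) atTop :=
        Lp.eLpNorm_lim_le_liminf_eLpNorm (fun k => (hgA k).1) g (.of_forall hlim)
    _ ≤ ENNReal.ofReal ‖L‖ := liminf_le_of_frequently_le' (.of_forall fun k =>
        eLpNorm_indicator_le_of_lpDual_eq_setIntegral hp hq hL (hA k) (hgA k))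
    _ < ⊤ := ENNReal.ofReal_lt_top

theorem lpMulPairing_surjective_of_isFiniteMeasure (hp : p ≠ ⊤) (hq : q ≠ ⊤) :
    Function.Surjective (lpMulPairing ℂ μ q p) := by
  intro L
  obtain ⟨g, hg, -, hL⟩ := exists_integrable_eq_setIntegral_of_lpDual hp L
  have hgq := memLp_of_lpDual_eq_setIntegral hp hq hg hL
  refine ⟨hgq.toLp g, lpCLM_ext_indicatorConstLp hp fun A hA hμA => ?_⟩
  rw [lpMulPairing_toLp_indicatorConstLp, hL]

end FiniteRiesz

section ChangeOfDensity

variable {X 𝕜 : Type*} [MeasurableSpace X] {μ : Measure X} {ρ : X → ℝ≥0} [RCLike 𝕜] {p q : ℝ≥0∞}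

theorem eLpNorm_withDensity (hρ : Measurable ρ) (hp0 : p ≠ 0) (hp : p ≠ ⊤) (u : X → 𝕜) :
    eLpNorm u p (μ.withDensity fun x => ρ x)
      = eLpNorm (fun x => (ρ x : ℝ) ^ p.toReal⁻¹ • u x) p μ := by
  have hp_pos : 0 < p.toReal := toReal_pos hp0 hp
  have hpow (x : X) : ‖(ρ x : ℝ) ^ p.toReal⁻¹ • u x‖ₑ ^ p.toReal = ρ x * ‖u x‖ₑ ^ p.toReal := by
    rw [enorm_smul, ENNReal.mul_rpow_of_nonneg _ _ hp_pos.le, Real.enorm_of_nonneg (by positivity),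
      ENNReal.ofReal_rpow_of_nonneg (by positivity) hp_pos.le,
      Real.rpow_inv_rpow NNReal.zero_le_coe hp_pos.ne', ofReal_coe_nnreal]
  rw [eLpNorm_eq_lintegral_rpow_enorm_toReal hp0 hp, eLpNorm_eq_lintegral_rpow_enorm_toReal hp0 hp,
    lintegral_withDensity_eq_lintegral_mul_non_measurable _ hρ.coe_nnreal_ennreal
      (.of_forall fun _ => coe_lt_top)]
  simp only [hpow, Pi.mul_apply]

theorem absolutelyContinuous_withDensity (hρ : Measurable ρ) (hρ0 : ∀ x, ρ x ≠ 0) :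
    μ ≪ μ.withDensity fun x => ρ x :=
  withDensity_absolutelyContinuous' hρ.coe_nnreal_ennreal.aemeasurable
    (.of_forall fun x => coe_ne_zero.2 (hρ0 x))

theorem memLp_withDensity_iff (hρ : Measurable ρ) (hρ0 : ∀ x, ρ x ≠ 0) (hp0 : p ≠ 0) (hp : p ≠ ⊤)
    {u : X → 𝕜} : MemLp u p (μ.withDensity fun x => ρ x) ↔
      MemLp (fun x => (ρ x : ℝ) ^ p.toReal⁻¹ • u x) p μ := by
  have hpow : Measurable fun x => (ρ x : ℝ) ^ p.toReal⁻¹ := hρ.coe_nnreal_real.pow_const _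
  simp only [MemLp, eLpNorm_withDensity hρ hp0 hp]
  refine and_congr_left fun _ => ⟨fun hu => ?_, fun hu => ?_⟩
  · exact hpow.aestronglyMeasurable.smul (hu.mono_ac (absolutelyContinuous_withDensity hρ hρ0))
  · refine ((hpow.inv.aestronglyMeasurable.smul hu).mono_ac
      (withDensity_absolutelyContinuous _ _)).congr (.of_forall fun x => ?_)
    exact inv_smul_smul₀ (Real.rpow_pos_of_pos (NNReal.coe_pos.2 (hρ0 x).bot_lt) _).ne' (u x)

variable [Fact (1 ≤ p)]

theorem ne_zero_of_fact_one_le : p ≠ 0 :=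
  (zero_lt_one.trans_le Fact.out).ne'

theorem memLp_rpow_smul (hρ : Measurable ρ) (hρ0 : ∀ x, ρ x ≠ 0) (hp : p ≠ ⊤)
    (u : Lp 𝕜 p (μ.withDensity fun x => ρ x)) :
    MemLp (fun x => (ρ x : ℝ) ^ p.toReal⁻¹ • u x) p μ :=
  (memLp_withDensity_iff hρ hρ0 ne_zero_of_fact_one_le hp).1 (Lp.memLp u)

/-- The isometry `u ↦ ρ^{1/p} u` from `L^p(ρ μ)` to `L^p(μ)`. -/
def lpOfWithDensity (𝕜 : Type*) [RCLike 𝕜] (μ : Measure X) (hρ : Measurable ρ) (hρ0 : ∀ x, ρ x ≠ 0)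
    (hp : p ≠ ⊤) : Lp 𝕜 p (μ.withDensity fun x => ρ x) →ₗᵢ[𝕜] Lp 𝕜 p μ where
  toFun u := (memLp_rpow_smul hρ hρ0 hp u).toLp _
  map_add' u v := by
    rw [← MemLp.toLp_add]
    refine MemLp.toLp_congr _ _ ?_
    filter_upwards [(absolutelyContinuous_withDensity hρ hρ0).ae_le (Lp.coeFn_add u v)] with x hx
    rw [hx, Pi.add_apply, smul_add, Pi.add_apply]
  map_smul' c u := by
    rw [RingHom.id_apply, ← MemLp.toLp_const_smul]
    refine MemLp.toLp_congr _ _ ?_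
    filter_upwards [(absolutelyContinuous_withDensity hρ hρ0).ae_le (Lp.coeFn_smul c u)] with x hx
    rw [hx, Pi.smul_apply, Pi.smul_apply, smul_comm]
  norm_map' u := by
    refine (Lp.norm_toLp _ (memLp_rpow_smul hρ hρ0 hp u)).trans ?_
    rw [← eLpNorm_withDensity hρ ne_zero_of_fact_one_le hp, Lp.norm_def]

theorem coeFn_lpOfWithDensity (hρ : Measurable ρ) (hρ0 : ∀ x, ρ x ≠ 0) (hp : p ≠ ⊤)
    (u : Lp 𝕜 p (μ.withDensity fun x => ρ x)) :
    lpOfWithDensity 𝕜 μ hρ hρ0 hp u =ᵐ[μ] fun x => (ρ x : ℝ) ^ p.toReal⁻¹ • u x :=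
  (memLp_rpow_smul hρ hρ0 hp u).coeFn_toLp

theorem lpOfWithDensity_surjective (hρ : Measurable ρ) (hρ0 : ∀ x, ρ x ≠ 0) (hp : p ≠ ⊤) :
    Function.Surjective (lpOfWithDensity 𝕜 μ hρ hρ0 hp) := by
  intro w
  have hcancel (x : X) : (ρ x : ℝ) ^ p.toReal⁻¹ • ((ρ x : ℝ) ^ p.toReal⁻¹)⁻¹ • w x = w x :=
    smul_inv_smul₀ (Real.rpow_pos_of_pos (NNReal.coe_pos.2 (hρ0 x).bot_lt) _).ne' (w x)
  have hu : MemLp (fun x => ((ρ x : ℝ) ^ p.toReal⁻¹)⁻¹ • w x) p (μ.withDensity fun x => ρ x) := by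
    rw [memLp_withDensity_iff hρ hρ0 ne_zero_of_fact_one_le hp]
    simpa only [hcancel] using Lp.memLp w
  refine ⟨hu.toLp _, ?_⟩
  ext1
  filter_upwards [coeFn_lpOfWithDensity hρ hρ0 hp (hu.toLp _),
    (absolutelyContinuous_withDensity hρ hρ0).ae_le hu.coeFn_toLp] with x hx hux
  rw [hx, hux, hcancel]

theorem lpMulPairing_lpOfWithDensity [Fact (1 ≤ q)] [q.HolderConjugate p] (hρ : Measurable ρ)
    (hρ0 : ∀ x, ρ x ≠ 0) (hp : p ≠ ⊤) (hq : q ≠ ⊤) (g : Lp 𝕜 q (μ.withDensity fun x => ρ x))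
    (u : Lp 𝕜 p (μ.withDensity fun x => ρ x)) :
    lpMulPairing 𝕜 μ q p (lpOfWithDensity 𝕜 μ hρ hρ0 hq g) (lpOfWithDensity 𝕜 μ hρ hρ0 hp u)
      = lpMulPairing 𝕜 (μ.withDensity fun x => ρ x) q p g u := by
  have hsplit (x : X) : (ρ x : ℝ) ^ q.toReal⁻¹ * (ρ x : ℝ) ^ p.toReal⁻¹ = ρ x := by
    rw [← Real.rpow_add (NNReal.coe_pos.2 (hρ0 x).bot_lt),
      (HolderConjugate.toReal_of_ne_top hq hp).inv_add_inv_eq_one, Real.rpow_one]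
  rw [lpMulPairing_apply, lpMulPairing_apply, integral_withDensity_eq_integral_smul hρ]
  refine integral_congr_ae ?_
  filter_upwards [coeFn_lpOfWithDensity hρ hρ0 hq g, coeFn_lpOfWithDensity hρ hρ0 hp u]
    with x hg hu
  rw [hg, hu, smul_mul_smul_comm, hsplit, NNReal.smul_def]

end ChangeOfDensity

section Riesz

variable {X : Type*} [MeasurableSpace X]

theorem lpMulPairing_surjective (μ : Measure X) [SigmaFinite μ] {p q : ℝ≥0∞} [Fact (1 ≤ p)]
    [Fact (1 ≤ q)] [q.HolderConjugate p] (hp : p ≠ ⊤) (hq : q ≠ ⊤) :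
    Function.Surjective (lpMulPairing ℂ μ q p) := by
  intro L
  obtain ⟨ρ, hρ_pos, hρ, hρ_lt⟩ := exists_pos_lintegral_lt_of_sigmaFinite μ one_ne_zero
  have hρ0 (x : X) : ρ x ≠ 0 := (hρ_pos x).ne'
  have := isFiniteMeasure_withDensity hρ_lt.ne_top
  obtain ⟨g, hg⟩ := lpMulPairing_surjective_of_isFiniteMeasure hp hq
    (L.comp (lpOfWithDensity ℂ μ hρ hρ0 hp).toContinuousLinearMap)
  refine ⟨lpOfWithDensity ℂ μ hρ hρ0 hq g, ContinuousLinearMap.ext fun v => ?_⟩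
  obtain ⟨u, rfl⟩ := lpOfWithDensity_surjective hρ hρ0 hp v
  rw [lpMulPairing_lpOfWithDensity, hg]
  rfl

end Riesz

section HahnBanach

theorem exists_strongDual_comp_eq {𝕜 V E : Type*} [RCLike 𝕜] [AddCommGroup V] [Module 𝕜 V]
    [NormedAddCommGroup E] [NormedSpace 𝕜 E] (Φ : V →ₗ[𝕜] E) (T : V →ₗ[𝕜] 𝕜) (C : ℝ)
    (hT : ∀ v, ‖T v‖ ≤ C * ‖Φ v‖) : ∃ L : StrongDual 𝕜 E, ∀ v, L (Φ v) = T v := by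
  have hker : T ∈ (LinearMap.ker Φ).dualAnnihilator := by
    refine (Submodule.mem_dualAnnihilator T).2 fun v hv => norm_le_zero_iff.1 ?_
    simpa only [LinearMap.mem_ker.1 hv, norm_zero, mul_zero] using hT v
  rw [← LinearMap.range_dualMap_eq_dualAnnihilator_ker] at hker
  obtain ⟨S, rfl⟩ := hker
  let S' : StrongDual 𝕜 (LinearMap.range Φ) :=
    (S.domRestrict (LinearMap.range Φ)).mkContinuous C (by rintro ⟨_, v, rfl⟩; exact hT v)
  obtain ⟨L, hL, -⟩ := exists_extension_norm_eq (LinearMap.range Φ) S'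
  exact ⟨L, fun v => hL ⟨Φ v, v, rfl⟩⟩

end HahnBanach

section Derivatives

variable {N : ℕ}

/-- `D` preserves smooth functions and is linear on them. The operators `pd`, `pdPow`, `mderiv` are
not linear on all functions, because of the junk value of `fderiv` at points of
non-differentiability. -/
structure IsLinearOnSmooth (D : (Euc N → ℂ) → Euc N → ℂ) : Prop where
  contDiff : ∀ {f}, ContDiff ℝ (⊤ : ℕ∞) f → ContDiff ℝ (⊤ : ℕ∞) (D f)
  map_add : ∀ {f g}, ContDiff ℝ (⊤ : ℕ∞) f → ContDiff ℝ (⊤ : ℕ∞) g → D (f + g) = D f + D g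
  map_smul : ∀ (c : ℂ) {f}, ContDiff ℝ (⊤ : ℕ∞) f → D (c • f) = c • D f

theorem isLinearOnSmooth_id : IsLinearOnSmooth fun f : Euc N → ℂ => f :=
  ⟨id, fun _ _ => rfl, fun _ _ _ => rfl⟩

theorem IsLinearOnSmooth.comp {D D' : (Euc N → ℂ) → Euc N → ℂ} (hD : IsLinearOnSmooth D)
    (hD' : IsLinearOnSmooth D') : IsLinearOnSmooth fun f => D (D' f) where
  contDiff hf := hD.contDiff (hD'.contDiff hf)
  map_add hf hg := by rw [hD'.map_add hf hg, hD.map_add (hD'.contDiff hf) (hD'.contDiff hg)]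
  map_smul c _ hf := by rw [hD'.map_smul c hf, hD.map_smul c (hD'.contDiff hf)]

theorem isLinearOnSmooth_pd (i : Fin N) : IsLinearOnSmooth (pd i) where
  contDiff hf := (hf.fderiv_right (m := (⊤ : ℕ∞)) (by simp)).clm_apply contDiff_const
  map_add hf hg := by
    ext x
    simp only [pd, Pi.add_apply, fderiv_add (hf.differentiable (by simp) x)
      (hg.differentiable (by simp) x), add_apply]
  map_smul c f hf := by
    ext x
    simp only [pd, Pi.smul_apply, fderiv_const_smul (hf.differentiable (by simp) x), smul_apply]

theorem isLinearOnSmooth_pdPow (i : Fin N) (k : ℕ) : IsLinearOnSmooth (pdPow i k) := by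
  induction k with
  | zero => exact isLinearOnSmooth_id
  | succ k ih => exact (isLinearOnSmooth_pd i).comp ih

theorem isLinearOnSmooth_mderiv (α : Fin N → ℕ) : IsLinearOnSmooth (mderiv α) := by
  unfold mderiv
  induction List.finRange N with
  | nil => exact isLinearOnSmooth_id
  | cons i l ih => exact (isLinearOnSmooth_pdPow i (α i)).comp ih

end Derivatives

section CountProd

variable {ι X E : Type*} [MeasurableSpace ι] [MeasurableSingletonClass ι]
  [MeasurableSpace X] {ν : Measure X} [SFinite ν] [NormedAddCommGroup E]

theorem eLpNorm_count_prod {p : ℝ≥0∞} (hp0 : p ≠ 0) (hp : p ≠ ⊤) {H : ι × X → E}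
    (hH : AEStronglyMeasurable H (Measure.count.prod ν)) :
    eLpNorm H p (Measure.count.prod ν)
      = (∑' i, eLpNorm (fun x => H (i, x)) p ν ^ p.toReal) ^ (1 / p.toReal) := by
  have hp_pos : 0 < p.toReal := toReal_pos hp0 hp
  rw [eLpNorm_eq_lintegral_rpow_enorm_toReal hp0 hp,
    lintegral_prod _ (hH.enorm.pow_const p.toReal), lintegral_count]
  simp only [eLpNorm_eq_lintegral_rpow_enorm_toReal hp0 hp, one_div,
    ENNReal.rpow_inv_rpow hp_pos.ne']

theorem hasSum_integral_count_prod [Countable ι] [NormedSpace ℝ E] [CompleteSpace E]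
    {H : ι × X → E} (hH : Integrable H (Measure.count.prod ν)) :
    HasSum (fun i => ∫ x, H (i, x) ∂ν) (∫ z, H z ∂Measure.count.prod ν) := by
  have hint : Integrable (fun i => ∫ x, H (i, x) ∂ν) Measure.count := hH.integral_prod_left
  rw [integral_prod _ hH, integral_countable hint]
  simpa only [measureReal_def, Measure.count_singleton, toReal_one, one_smul]
    using (integrable_count_iff.1 hint).of_norm.hasSum

end CountProd

section WeightedSmooth

variable {N : ℕ} {w : (Fin N → ℕ) → Euc N → ℝ} {p q : ℝ}

/-- The norm `(∑_α ‖e^{w_α} ∂^α φ‖_p^p)^{1/p}` for a family of weights `w_α`; `rnorm` is the case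
of the weights `omegaWeight`. -/
def weightedNorm (w : (Fin N → ℕ) → Euc N → ℝ) (p : ℝ) (φ : Euc N → ℂ) : ℝ≥0∞ :=
  (∑' α, wLp (.ofReal p) (w α) (mderiv α φ) ^ p) ^ (1 / p)

/-- Membership in the space of smooth functions of finite `weightedNorm`. -/
def MemWeightedSmooth (w : (Fin N → ℕ) → Euc N → ℝ) (p : ℝ) (φ : Euc N → ℂ) : Prop :=
  ContDiff ℝ (⊤ : ℕ∞) φ ∧ weightedNorm w p φ < ⊤

/-- The measure on `ℕ₀^N × ℝ^N` whose `L^p` space is the `ℓ^p`-sum over multi-indices of copies of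
`L^p(ℝ^N)`. -/
abbrev jetMeasure (N : ℕ) : Measure ((Fin N → ℕ) × Euc N) :=
  Measure.count.prod volume

/-- The weighted jet `{(-1)^{|α|} e^{w_α} ∂^α φ}_α`, as a function on `ℕ₀^N × ℝ^N`. -/
def weightedJet (w : (Fin N → ℕ) → Euc N → ℝ) (φ : Euc N → ℂ) (z : (Fin N → ℕ) × Euc N) : ℂ :=
  (-1) ^ msize z.1 * (Real.exp (w z.1 z.2) : ℂ) * mderiv z.1 φ z.2

theorem weightedJet_add {φ ψ : Euc N → ℂ} (hφ : ContDiff ℝ (⊤ : ℕ∞) φ)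
    (hψ : ContDiff ℝ (⊤ : ℕ∞) ψ) :
    weightedJet w (φ + ψ) = weightedJet w φ + weightedJet w ψ := by
  ext z
  simp only [weightedJet, Pi.add_apply, (isLinearOnSmooth_mderiv z.1).map_add hφ hψ, mul_add]

theorem weightedJet_smul (c : ℂ) {φ : Euc N → ℂ} (hφ : ContDiff ℝ (⊤ : ℕ∞) φ) :
    weightedJet w (c • φ) = c • weightedJet w φ := by
  ext z
  simp only [weightedJet, Pi.smul_apply, (isLinearOnSmooth_mderiv z.1).map_smul c hφ, smul_eq_mul,
    mul_left_comm c]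

theorem measurable_weightedJet (hw : ∀ α, Measurable (w α)) {φ : Euc N → ℂ}
    (hφ : ContDiff ℝ (⊤ : ℕ∞) φ) : Measurable (weightedJet w φ) := by
  refine measurable_from_prod_countable_right fun α => ?_
  have hexp : Measurable fun x => (Real.exp (w α x) : ℂ) :=
    Complex.measurable_ofReal.comp (hw α).exp
  have hderiv : Measurable (mderiv α φ) :=
    ((isLinearOnSmooth_mderiv α).contDiff hφ).continuous.measurable
  simpa only [weightedJet] using (hexp.const_mul _).fun_mul hderiv

theorem eLpNorm_weightedJet (hw : ∀ α, Measurable (w α)) (hp : 0 < p) {φ : Euc N → ℂ}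
    (hφ : ContDiff ℝ (⊤ : ℕ∞) φ) :
    eLpNorm (weightedJet w φ) (.ofReal p) (jetMeasure N) = weightedNorm w p φ := by
  have hslice (α : Fin N → ℕ) : eLpNorm (fun x => weightedJet w φ (α, x)) (.ofReal p) volume
      = wLp (.ofReal p) (w α) (mderiv α φ) :=
    eLpNorm_congr_norm_ae (.of_forall fun x => by
      simp only [weightedJet, norm_mul, norm_pow, norm_neg, norm_one, one_pow, one_mul,
        Complex.norm_real, norm_norm])
  rw [eLpNorm_count_prod (ofReal_pos.2 hp).ne' ofReal_ne_top
    (measurable_weightedJet hw hφ).aestronglyMeasurable, toReal_ofReal hp.le, weightedNorm]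
  simp only [hslice]

theorem memLp_weightedJet_iff (hw : ∀ α, Measurable (w α)) (hp : 0 < p) {φ : Euc N → ℂ}
    (hφ : ContDiff ℝ (⊤ : ℕ∞) φ) :
    MemLp (weightedJet w φ) (.ofReal p) (jetMeasure N) ↔ weightedNorm w p φ < ⊤ := by
  rw [MemLp, eLpNorm_weightedJet hw hp hφ,
    and_iff_right (measurable_weightedJet hw hφ).aestronglyMeasurable]

theorem MemWeightedSmooth.memLp_weightedJet (hw : ∀ α, Measurable (w α)) (hp : 0 < p)
    {φ : Euc N → ℂ} (hφ : MemWeightedSmooth w p φ) :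
    MemLp (weightedJet w φ) (.ofReal p) (jetMeasure N) :=
  (memLp_weightedJet_iff hw hp hφ.1).2 hφ.2

/-- The space of smooth functions of finite `weightedNorm`. -/
def weightedSmooth (hw : ∀ α, Measurable (w α)) (hp : 0 < p) : Submodule ℂ (Euc N → ℂ) where
  carrier := {φ | MemWeightedSmooth w p φ}
  add_mem' {φ ψ} hφ hψ := by
    have hsum : ContDiff ℝ (⊤ : ℕ∞) (φ + ψ) := hφ.1.add hψ.1
    refine ⟨hsum, (memLp_weightedJet_iff hw hp hsum).1 ?_⟩
    rw [weightedJet_add hφ.1 hψ.1]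
    exact (hφ.memLp_weightedJet hw hp).add (hψ.memLp_weightedJet hw hp)
  zero_mem' := by
    have hzero : ContDiff ℝ (⊤ : ℕ∞) (0 : Euc N → ℂ) := contDiff_const
    refine ⟨hzero, (memLp_weightedJet_iff hw hp hzero).1 ?_⟩
    rw [← zero_smul ℂ 0, weightedJet_smul 0 hzero, zero_smul]
    exact MemLp.zero
  smul_mem' c φ hφ := by
    have hsmul : ContDiff ℝ (⊤ : ℕ∞) (c • φ) := hφ.1.const_smul c
    refine ⟨hsmul, (memLp_weightedJet_iff hw hp hsmul).1 ?_⟩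
    rw [weightedJet_smul c hφ.1]
    exact (hφ.memLp_weightedJet hw hp).const_smul c

/-- The embedding `φ ↦ {(-1)^{|α|} e^{w_α} ∂^α φ}_α` of `weightedSmooth` into `L^p(jetMeasure)`. -/
def weightedJetLp (hw : ∀ α, Measurable (w α)) (hp : 0 < p) :
    weightedSmooth hw hp →ₗ[ℂ] Lp ℂ (.ofReal p) (jetMeasure N) where
  toFun φ := (φ.2.memLp_weightedJet hw hp).toLp _
  map_add' φ ψ := by
    rw [← MemLp.toLp_add]
    exact MemLp.toLp_congr _ _ (.of_eq (weightedJet_add φ.2.1 ψ.2.1))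
  map_smul' c φ := by
    rw [RingHom.id_apply, ← MemLp.toLp_const_smul]
    exact MemLp.toLp_congr _ _ (.of_eq (weightedJet_smul c φ.2.1))

theorem norm_weightedJetLp (hw : ∀ α, Measurable (w α)) (hp : 0 < p) (φ : weightedSmooth hw hp) :
    ‖weightedJetLp hw hp φ‖ = (weightedNorm w p φ).toReal := by
  rw [← eLpNorm_weightedJet hw hp φ.2.1]
  exact Lp.norm_toLp _ (φ.2.memLp_weightedJet hw hp)

theorem exists_memLp_integral_mul_weightedJet_eq (hw : ∀ α, Measurable (w α))
    (hpq : p.HolderConjugate q) (T : weightedSmooth hw hpq.pos →ₗ[ℂ] ℂ) (C : ℝ)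
    (hT : ∀ φ, ‖T φ‖ ≤ C * (weightedNorm w p φ).toReal) :
    ∃ h : (Fin N → ℕ) × Euc N → ℂ, StronglyMeasurable h ∧ MemLp h (.ofReal q) (jetMeasure N) ∧
      ∀ φ : weightedSmooth hw hpq.pos, ∫ z, h z * weightedJet w φ z ∂jetMeasure N = T φ := by
  have := hpq.symm.ennrealOfReal
  have : Fact (1 ≤ ENNReal.ofReal p) := ⟨one_le_ofReal.2 hpq.lt.le⟩
  have : Fact (1 ≤ ENNReal.ofReal q) := ⟨one_le_ofReal.2 hpq.symm.lt.le⟩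
  obtain ⟨L, hL⟩ := exists_strongDual_comp_eq (weightedJetLp hw hpq.pos) T C fun φ => by
    rw [norm_weightedJetLp]; exact hT φ
  obtain ⟨h, rfl⟩ := lpMulPairing_surjective (jetMeasure N) (p := .ofReal p)
    (q := .ofReal q) ofReal_ne_top ofReal_ne_top L
  refine ⟨h, Lp.stronglyMeasurable h, Lp.memLp h, fun φ => ?_⟩
  rw [← hL, ← lpMulPairing_toLp (Lp.memLp h) (φ.2.memLp_weightedJet hw hpq.pos), Lp.toLp_coeFn]
  rfl

end WeightedSmooth

theorem Omnp_dual_structure_general {N : ℕ} {w : (Fin N → ℕ) → Euc N → ℝ}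
    (hw : ∀ α, Measurable (w α)) {p q : ℝ} (hpq : p.HolderConjugate q) (T : (Euc N → ℂ) → ℂ)
    (hadd : ∀ φ ψ, MemWeightedSmooth w p φ → MemWeightedSmooth w p ψ → T (φ + ψ) = T φ + T ψ)
    (hsmul : ∀ (c : ℂ) φ, MemWeightedSmooth w p φ → T (c • φ) = c * T φ) (C : ℝ)
    (hbound : ∀ φ, MemWeightedSmooth w p φ → ‖T φ‖ ≤ C * (weightedNorm w p φ).toReal) :
    ∃ f : (Fin N → ℕ) → Euc N → ℂ, (∀ α, AEStronglyMeasurable (f α) volume) ∧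
      ∑' α, wLp (.ofReal q) (fun x => -w α x) (f α) ^ q < ⊤ ∧
      ∀ φ, MemWeightedSmooth w p φ →
        HasSum (fun α => (-1) ^ msize α * ∫ x, f α x * mderiv α φ x) (T φ) := by
  have hq := hpq.symm.pos
  obtain ⟨h, hmeas, hmem, hrep⟩ := exists_memLp_integral_mul_weightedJet_eq hw hpq
    { toFun φ := T φ
      map_add' φ ψ := hadd φ ψ φ.2 ψ.2
      map_smul' c φ := hsmul c φ φ.2 } C fun φ => hbound φ φ.2
  refine ⟨fun α x => h (α, x) * (Real.exp (w α x) : ℂ), fun α => ?_, ?_, fun φ hφ => ?_⟩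
  · exact ((hmeas.measurable.comp measurable_prodMk_left).mul
      (Complex.measurable_ofReal.comp (hw α).exp)).aestronglyMeasurable
  · have hslice (α : Fin N → ℕ) : wLp (.ofReal q) (fun x => -w α x)
        (fun x => h (α, x) * (Real.exp (w α x) : ℂ)) = eLpNorm (fun x => h (α, x)) (.ofReal q) :=
      eLpNorm_congr_norm_ae (.of_forall fun x => by
        simp only [norm_mul, Complex.norm_real, Real.norm_eq_abs, Real.abs_exp, abs_norm]
        rw [mul_left_comm, ← Real.exp_add, neg_add_cancel, Real.exp_zero, mul_one])
    have hfin := hmem.2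
    rw [eLpNorm_count_prod (ofReal_pos.2 hq).ne' ofReal_ne_top hmem.1, toReal_ofReal hq.le,
      ENNReal.rpow_lt_top_iff_of_pos (one_div_pos.2 hq)] at hfin
    simpa only [hslice] using hfin
  · have := hpq.symm.ennrealOfReal
    have hTφ : T φ = ∫ z, h z * weightedJet w φ z ∂jetMeasure N := (hrep ⟨φ, hφ⟩).symm
    rw [hTφ]
    refine (hasSum_integral_count_prod
      (hmem.integrable_mul (hφ.memLp_weightedJet hw hpq.pos))).congr_fun fun α => ?_
    rw [← integral_const_mul]
    refine integral_congr_ae (.of_forall fun x => ?_)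
    simp only [Pi.mul_apply, weightedJet]
    ring

section OmegaWeight

variable {N : ℕ}

/-- The exponents `w_α(x) = -m φ*(|α|/m) - n ω(|x|)` for which `weightedNorm` is `rnorm`. -/
def omegaWeight (ω : ℝ → ℝ) (m : ℕ) (n : ℤ) (α : Fin N → ℕ) (x : Euc N) : ℝ :=
  -(m * phiStar ω (msize α / m)) + -(n * ω ‖x‖)

theorem IsWeightFun.measurable_omegaWeight {ω : ℝ → ℝ} (hω : IsWeightFun ω) (m : ℕ) (n : ℤ)
    (α : Fin N → ℕ) : Measurable (omegaWeight ω m n α) :=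
  have hmeas : Measurable fun x : Euc N => ω ‖x‖ :=
    (hω.continuous.comp_continuous continuous_norm norm_nonneg).measurable
  (hmeas.const_mul _).neg.const_add _

theorem wLp_const_add_rpow {r : ℝ≥0∞} {s : ℝ} (hs : 0 ≤ s) (a : ℝ) (w : Euc N → ℝ)
    (g : Euc N → ℂ) :
    wLp r (fun x => a + w x) g ^ s = wLp r w g ^ s * .ofReal (Real.exp (a * s)) := by
  have hscale : wLp r (fun x => a + w x) g = .ofReal (Real.exp a) * wLp r w g := by
    rw [wLp, wLp, ← Real.enorm_of_nonneg (Real.exp_pos a).le, ← eLpNorm_const_smul]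
    refine congrArg (eLpNorm · r volume) (funext fun x => ?_)
    rw [Pi.smul_apply, smul_eq_mul, Real.exp_add, mul_assoc]
  rw [hscale, ENNReal.mul_rpow_of_nonneg _ _ hs, mul_comm,
    ENNReal.ofReal_rpow_of_nonneg (Real.exp_pos a).le hs, Real.exp_mul]

theorem rnorm_eq_weightedNorm {ω : ℝ → ℝ} {m : ℕ} {n : ℤ} {p : ℝ} (hp : 0 ≤ p) (φ : Euc N → ℂ) :
    rnorm ω m n p φ = weightedNorm (omegaWeight ω m n) p φ := by
  have hterm (α : Fin N → ℕ) (g : Euc N → ℂ) :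
      wLp (.ofReal p) (omegaWeight ω m n α) g ^ p = wLp (.ofReal p) (fun x => -(n * ω ‖x‖)) g ^ p
        * .ofReal (Real.exp (-(m * p * phiStar ω (msize α / m)))) := by
    rw [mul_right_comm, ← neg_mul, ← wLp_const_add_rpow hp]
    rfl
  simp only [rnorm, weightedNorm, hterm]

theorem memO_iff_memWeightedSmooth {ω : ℝ → ℝ} {m : ℕ} {n : ℤ} {p : ℝ} (hp : 0 ≤ p)
    {φ : Euc N → ℂ} : memO ω m n p φ ↔ MemWeightedSmooth (omegaWeight ω m n) p φ := by
  rw [memO, MemWeightedSmooth, rnorm_eq_weightedNorm hp]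

theorem wLp_neg_omegaWeight_rpow {ω : ℝ → ℝ} {m : ℕ} {n : ℤ} {r : ℝ≥0∞} {s : ℝ} (hs : 0 ≤ s)
    (α : Fin N → ℕ) (g : Euc N → ℂ) :
    wLp r (fun x => -omegaWeight ω m n α x) g ^ s
      = wLp r (fun x => n * ω ‖x‖) g ^ s
        * .ofReal (Real.exp (s * m * phiStar ω (msize α / m))) := by
  simp only [omegaWeight, neg_add, neg_neg, wLp_const_add_rpow hs]
  rw [mul_comm s, mul_right_comm]

end OmegaWeight

/-- Structure theorem for `(O^m_{n,ω,p}(ℝ^N))'`, `1 < p < ∞`: every continuous linear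
functional is of the form `T = Σ_α ∂^α f_α` with `Σ_α ‖e^{nω}f_α‖_{p'}^{p'} e^{p'mφ*(|α|/m)} < ∞`. -/
theorem Omnp_dual_structure
    {N : ℕ} (ω : ℝ → ℝ) (hω : IsWeightFun ω)
    (m : ℕ) (hm : 0 < m) (n : ℤ) (p p' : ℝ) (hp : 1 < p) (hconj : 1/p + 1/p' = 1)
    (T : (Euc N → ℂ) → ℂ)
    (hadd : ∀ φ ψ, memO ω m n p φ → memO ω m n p ψ → T (φ + ψ) = T φ + T ψ)
    (hsmul : ∀ (c : ℂ) φ, memO ω m n p φ → T (c • φ) = c * T φ)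
    (C : ℝ) (hC : 0 ≤ C)
    (hbound : ∀ φ, memO ω m n p φ → ‖T φ‖ ≤ C * (rnorm ω m n p φ).toReal) :
    ∃ f : (Fin N → ℕ) → Euc N → ℂ,
      (∀ α, AEStronglyMeasurable (f α) volume) ∧
      (∑' α : Fin N → ℕ,
        (wLp (ENNReal.ofReal p') (fun x => (n : ℝ) * ω ‖x‖) (f α)) ^ p' *
          ENNReal.ofReal (Real.exp (p' * (m : ℝ) * phiStar ω ((msize α : ℝ) / m)))) < ⊤ ∧
      ∀ φ, memO ω m n p φ →
        T φ = ∑' α : Fin N → ℕ, (-1 : ℂ) ^ (msize α) * ∫ x, f α x * mderiv α φ x := by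
  have hpq : p.HolderConjugate p' :=
    Real.holderConjugate_iff.2 ⟨hp, by simpa only [one_div] using hconj⟩
  simp only [memO_iff_memWeightedSmooth hpq.nonneg, rnorm_eq_weightedNorm hpq.nonneg]
    at hadd hsmul hbound ⊢
  simp only [← wLp_neg_omegaWeight_rpow hpq.symm.nonneg]
  obtain ⟨f, hf, hfin, hrep⟩ :=
    Omnp_dual_structure_general (hω.measurable_omegaWeight m n) hpq T hadd hsmul C hbound
  exact ⟨f, hf, hfin, fun φ hφ => (hrep φ hφ).tsum_eq.symm⟩
end
end
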